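/- arXiv:1908.06483 — 2 statements merged into one kernel-verified Lean document; each statement's English description precedes it below -/
import Mathlib

section
/- For every a ≥ 1, the first Dirichlet biharmonic eigenvalue satisfies the lower bound λ₁(a) ≥ L(a), where L(a) = ρ(π²a⁴)·a⁻⁴ + ρ(π²a⁻⁴)·a⁴ − 2π⁴. -/
open MeasureTheory Real Filter

noncomputable section

/-- Directional (partial) derivative of `u : ℝ × ℝ → ℝ` in direction `v`. -/
def pd (v : ℝ × ℝ) (u : ℝ × ℝ → ℝ) : ℝ × ℝ → ℝ := fun p => fderiv ℝ u p v

/-- Second partial derivative `∂²u/∂x²`. -/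
def uxx (u : ℝ × ℝ → ℝ) : ℝ × ℝ → ℝ := pd (1, 0) (pd (1, 0) u)

/-- Second partial derivative `∂²u/∂y²`. -/
def uyy (u : ℝ × ℝ → ℝ) : ℝ × ℝ → ℝ := pd (0, 1) (pd (0, 1) u)

/-- Mixed second partial derivative `∂²u/∂x∂y`. -/
def uxy (u : ℝ × ℝ → ℝ) : ℝ × ℝ → ℝ := pd (0, 1) (pd (1, 0) u)

/-- The Laplacian `Δu = u_xx + u_yy`. -/
def lap (u : ℝ × ℝ → ℝ) : ℝ × ℝ → ℝ := fun p => uxx u p + uyy u p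

/-- The open rectangle `R_a = (0,a) × (0,1/a)` of unit area. -/
def Rect (a : ℝ) : Set (ℝ × ℝ) := Set.Ioo 0 a ×ˢ Set.Ioo 0 (1 / a)

/-- Admissible test functions: smooth, compactly supported inside `Ω`. -/
def Adm (Ω : Set (ℝ × ℝ)) (u : ℝ × ℝ → ℝ) : Prop :=
  ContDiff ℝ (⊤ : ℕ∞) u ∧ HasCompactSupport u ∧ tsupport u ⊆ Ω

/-- First Dirichlet eigenvalue of the biharmonic operator on `R_a`,
characterized variationally as the infimum of the Rayleigh quotient. -/
def lam1 (a : ℝ) : ℝ :=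
  sInf { μ | ∃ u : ℝ × ℝ → ℝ, Adm (Rect a) u ∧ u ≠ 0 ∧
    μ = (∫ p, (lap u p) ^ 2) / (∫ p, (u p) ^ 2) }

/-- Admissible one-dimensional test functions: smooth, compactly supported in `(0,1)`. -/
def Adm1 (v : ℝ → ℝ) : Prop :=
  ContDiff ℝ (⊤ : ℕ∞) v ∧ HasCompactSupport v ∧ tsupport v ⊆ Set.Ioo 0 1

/-- `ρ(α)`: first eigenvalue of `y'''' - 2αy'' = λy` on `(0,1)` with clamped
boundary conditions, characterized variationally. -/
def rho (α : ℝ) : ℝ :=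
  sInf { r | ∃ v : ℝ → ℝ, Adm1 v ∧ (∫ x in (0:ℝ)..1, (v x) ^ 2) = 1 ∧
    r = (∫ x in (0:ℝ)..1, (deriv (deriv v) x) ^ 2) +
        2 * α * (∫ x in (0:ℝ)..1, (deriv v x) ^ 2) }

namespace Adm

variable {Ω : Set (ℝ × ℝ)} {u w c : ℝ × ℝ → ℝ}

protected lemma differentiable (hu : Adm Ω u) : Differentiable ℝ u :=
  hu.1.differentiable (by simp)

lemma integrable (hu : Adm Ω u) : Integrable u :=
  hu.1.continuous.integrable_of_hasCompactSupport hu.2.1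

lemma eq_zero (hu : Adm Ω u) {p : ℝ × ℝ} (hp : p ∉ Ω) : u p = 0 :=
  image_eq_zero_of_notMem_tsupport fun h => hp (hu.2.2 h)

protected lemma pd (hu : Adm Ω u) (v : ℝ × ℝ) : Adm Ω (pd v u) := by
  refine ⟨?_, hu.2.1.fderiv_apply ℝ v, (tsupport_fderiv_apply_subset ℝ v).trans hu.2.2⟩
  exact (hu.1.fderiv_right (m := ((⊤ : ℕ∞) : WithTop ℕ∞)) (by simp)).clm_apply contDiff_const

/-- Multiplying an admissible function by a function that is only smooth on `Ω` keeps it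
admissible. -/
lemma mul_left (hu : Adm Ω u) (hΩ : IsOpen Ω) (hc : ContDiffOn ℝ (⊤ : ℕ∞) c Ω) :
    Adm Ω (fun p => c p * u p) := by
  refine ⟨contDiff_iff_contDiffAt.2 fun p => ?_, hu.2.1.mul_left,
    (tsupport_mul_subset_right (f := c)).trans hu.2.2⟩
  by_cases hp : p ∈ tsupport u
  · exact (hc.contDiffAt (hΩ.mem_nhds (hu.2.2 hp))).mul hu.1.contDiffAt
  · refine (contDiffAt_const (c := (0 : ℝ))).congr_of_eventuallyEq ?_
    filter_upwards [notMem_tsupport_iff_eventuallyEq.1 hp] with q hq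
    simp [hq]

protected lemma mul (hu : Adm Ω u) (hw : Adm Ω w) : Adm Ω (fun p => u p * w p) :=
  ⟨hu.1.mul hw.1, hw.2.1.mul_left, (tsupport_mul_subset_right (f := u)).trans hw.2.2⟩

protected lemma sub (hu : Adm Ω u) (hw : Adm Ω w) : Adm Ω (fun p => u p - w p) :=
  ⟨hu.1.sub hw.1, hu.2.1.sub hw.2.1,
    (tsupport_sub u w).trans (Set.union_subset hu.2.2 hw.2.2)⟩

protected lemma sq (hu : Adm Ω u) : Adm Ω (fun p => u p ^ 2) := by
  simpa only [pow_two] using hu.mul hu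

end Adm

lemma pd_mul {f g : ℝ × ℝ → ℝ} {p : ℝ × ℝ} (v : ℝ × ℝ) (hf : DifferentiableAt ℝ f p)
    (hg : DifferentiableAt ℝ g p) :
    pd v (fun q => f q * g q) p = f p * pd v g p + pd v f p * g p := by
  simp only [pd, fderiv_fun_mul hf hg]
  simp [mul_comm]

lemma pd_sub {f g : ℝ × ℝ → ℝ} {p : ℝ × ℝ} (v : ℝ × ℝ) (hf : DifferentiableAt ℝ f p)
    (hg : DifferentiableAt ℝ g p) :
    pd v (fun q => f q - g q) p = pd v f p - pd v g p := by
  simp only [pd, fderiv_fun_sub hf hg]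
  simp

lemma pd_comm {u : ℝ × ℝ → ℝ} (hu : ContDiff ℝ (⊤ : ℕ∞) u) (v w : ℝ × ℝ) :
    pd v (pd w u) = pd w (pd v u) := by
  have key (v w p) : pd v (pd w u) p = fderiv ℝ (fderiv ℝ u) p v w := by
    have hd : DifferentiableAt ℝ (fderiv ℝ u) p :=
      ((hu.fderiv_right (m := ((⊤ : ℕ∞) : WithTop ℕ∞)) (by simp)).differentiable
        (by simp)).differentiableAt
    change fderiv ℝ (fun q => fderiv ℝ u q w) p v = _
    rw [fderiv_clm_apply hd (differentiableAt_const w)]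
    simp
  ext p
  rw [key, key]
  refine (hu.contDiffAt.isSymmSndFDerivAt ?_) v w
  rw [minSmoothness_of_isRCLikeNormedField]
  exact WithTop.coe_le_coe.2 (le_top : (2 : ℕ∞) ≤ ⊤)

lemma Adm.integral_pd {Ω : Set (ℝ × ℝ)} {u : ℝ × ℝ → ℝ} (hu : Adm Ω u) (v : ℝ × ℝ) :
    ∫ p, pd v u p = 0 := by
  have h := integral_mul_fderiv_eq_neg_fderiv_mul_of_integrable
    (μ := (volume : Measure (ℝ × ℝ))) (f := fun _ => (1 : ℝ)) (g := u) (v := v)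
    (by simp) ((hu.pd v).integrable.congr (.of_eq (by ext; simp [pd])))
    (by simpa using hu.integrable)
    (fun _ _ => differentiableAt_const _) (fun _ _ => hu.differentiable _)
  simpa [pd] using h

/-- If `c` solves the Riccati equation `∂ᵥc + c² = -κ` on `Ω`, then
`∫ (∂ᵥw)² - κ w² = ∫ (∂ᵥw - c w)²`. -/
lemma Adm.integral_riccati {Ω : Set (ℝ × ℝ)} {w c : ℝ × ℝ → ℝ} {κ : ℝ} {v : ℝ × ℝ}
    (hw : Adm Ω w) (hΩ : IsOpen Ω) (hc : ContDiffOn ℝ (⊤ : ℕ∞) c Ω)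
    (hr : ∀ p ∈ Ω, pd v c p + c p ^ 2 = -κ) :
    ∫ p, (pd v w p - c p * w p) ^ 2 = (∫ p, pd v w p ^ 2) - κ * ∫ p, w p ^ 2 := by
  have hcw := hw.mul_left hΩ hc
  have hcww := hcw.mul hw
  have hpt : ∀ p, (pd v w p - c p * w p) ^ 2 =
      pd v w p ^ 2 - κ * w p ^ 2 - pd v (fun q => c q * w q * w q) p := by
    intro p
    by_cases hp : p ∈ Ω
    · have hcp : DifferentiableAt ℝ c p :=
        (hc.contDiffAt (hΩ.mem_nhds hp)).differentiableAt (by simp)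
      rw [pd_mul v (hcw.differentiable p) (hw.differentiable p),
        pd_mul v hcp (hw.differentiable p)]
      linear_combination w p ^ 2 * hr p hp
    · simp [hw.eq_zero hp, (hw.pd v).eq_zero hp, (hcww.pd v).eq_zero hp]
  have hdiff : Integrable fun p => pd v w p ^ 2 - κ * w p ^ 2 :=
    (hw.pd v).sq.integrable.sub (hw.sq.integrable.const_mul κ)
  simp_rw [hpt]
  rw [integral_sub hdiff (hcww.pd v).integrable, hcww.integral_pd,
    integral_sub (hw.pd v).sq.integrable (hw.sq.integrable.const_mul κ), integral_const_mul,
    sub_zero]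

/-- The function `k cot (k x)`, a solution of `c' + c² = -k²`. -/
def kcot (k x : ℝ) : ℝ := k * (cos (k * x) / sin (k * x))

lemma contDiffAt_kcot {k x : ℝ} (h : sin (k * x) ≠ 0) :
    ContDiffAt ℝ (⊤ : ℕ∞) (kcot k) x := by
  have h1 : ContDiff ℝ (⊤ : ℕ∞) fun x : ℝ => k * x := contDiff_const.mul contDiff_id
  exact contDiffAt_const.mul
    ((contDiff_cos.comp h1).contDiffAt.div (contDiff_sin.comp h1).contDiffAt h)

lemma hasDerivAt_kcot {k x : ℝ} (h : sin (k * x) ≠ 0) :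
    HasDerivAt (kcot k) (-k ^ 2 - kcot k x ^ 2) x := by
  have h1 : HasDerivAt (fun x : ℝ => k * x) k x := by simpa using (hasDerivAt_id x).const_mul k
  refine ((h1.cos.div h1.sin h).const_mul k).congr_deriv ?_
  unfold kcot
  field_simp

lemma sin_pi_div_mul_ne_zero {A x : ℝ} (hx : x ∈ Set.Ioo 0 A) : sin (π / A * x) ≠ 0 := by
  have hA : 0 < A := hx.1.trans hx.2
  refine (sin_pos_of_pos_of_lt_pi (by have := hx.1; positivity) ?_).ne'
  rw [div_mul_eq_mul_div, div_lt_iff₀ hA]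
  exact mul_lt_mul_of_pos_left hx.2 pi_pos

section Rectangle

variable {A B : ℝ} {u : ℝ × ℝ → ℝ}

lemma contDiffOn_kcot_fst : ContDiffOn ℝ (⊤ : ℕ∞) (fun p : ℝ × ℝ => kcot (π / A) p.1)
    (Set.Ioo 0 A ×ˢ Set.Ioo 0 B) := fun p hp =>
  ((contDiffAt_kcot (sin_pi_div_mul_ne_zero hp.1)).comp p contDiffAt_fst).contDiffWithinAt

lemma contDiffOn_kcot_snd : ContDiffOn ℝ (⊤ : ℕ∞) (fun p : ℝ × ℝ => kcot (π / B) p.2)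
    (Set.Ioo 0 A ×ˢ Set.Ioo 0 B) := fun p hp =>
  ((contDiffAt_kcot (sin_pi_div_mul_ne_zero hp.2)).comp p contDiffAt_snd).contDiffWithinAt

lemma pd_kcot_fst {p : ℝ × ℝ} (v : ℝ × ℝ) (hp : p ∈ Set.Ioo 0 A ×ˢ Set.Ioo 0 B) :
    pd v (fun p : ℝ × ℝ => kcot (π / A) p.1) p
      = v.1 * (-(π / A) ^ 2 - kcot (π / A) p.1 ^ 2) := by
  have h := (hasDerivAt_kcot (sin_pi_div_mul_ne_zero hp.1)).comp_hasFDerivAt p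
    (hasFDerivAt_fst (𝕜 := ℝ) (E := ℝ) (F := ℝ) (p := p))
  change fderiv ℝ (kcot (π / A) ∘ Prod.fst) p v = _
  rw [h.fderiv]
  simp [mul_comm]

lemma pd_kcot_snd {p : ℝ × ℝ} (v : ℝ × ℝ) (hp : p ∈ Set.Ioo 0 A ×ˢ Set.Ioo 0 B) :
    pd v (fun p : ℝ × ℝ => kcot (π / B) p.2) p
      = v.2 * (-(π / B) ^ 2 - kcot (π / B) p.2 ^ 2) := by
  have h := (hasDerivAt_kcot (sin_pi_div_mul_ne_zero hp.2)).comp_hasFDerivAt p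
    (hasFDerivAt_snd (𝕜 := ℝ) (E := ℝ) (F := ℝ) (p := p))
  change fderiv ℝ (kcot (π / B) ∘ Prod.snd) p v = _
  rw [h.fderiv]
  simp [mul_comm]

/-- The product `(-∂ₓ² - (π/A)²)(-∂ᵧ² - (π/B)²)` of the two shifted one-dimensional Dirichlet
Laplacians is a nonnegative form on the rectangle. -/
lemma Adm.integral_uxy_sq_ge (hu : Adm (Set.Ioo 0 A ×ˢ Set.Ioo 0 B) u) :
    (π / B) ^ 2 * (∫ p, pd (1, 0) u p ^ 2) + (π / A) ^ 2 * (∫ p, pd (0, 1) u p ^ 2)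
      - (π / A) ^ 2 * (π / B) ^ 2 * (∫ p, u p ^ 2) ≤ ∫ p, uxy u p ^ 2 := by
  have hΩ : IsOpen (Set.Ioo (0 : ℝ) A ×ˢ Set.Ioo (0 : ℝ) B) := isOpen_Ioo.prod isOpen_Ioo
  set d : ℝ × ℝ → ℝ := fun p => kcot (π / B) p.2
  have hd : ContDiffOn ℝ (⊤ : ℕ∞) d (Set.Ioo 0 A ×ˢ Set.Ioo 0 B) := contDiffOn_kcot_snd
  have hdu := hu.mul_left hΩ hd
  have hG := (hu.pd (0, 1)).sub hdu
  set G : ℝ × ℝ → ℝ := fun p => pd (0, 1) u p - d p * u p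
  have hG0 : 0 ≤ (∫ p, pd (1, 0) G p ^ 2) - (π / A) ^ 2 * ∫ p, G p ^ 2 := by
    rw [← hG.integral_riccati hΩ contDiffOn_kcot_fst fun p hp => by rw [pd_kcot_fst _ hp]; ring]
    exact integral_nonneg fun p => sq_nonneg _
  have hr : ∀ p ∈ Set.Ioo (0 : ℝ) A ×ˢ Set.Ioo (0 : ℝ) B,
      pd (0, 1) d p + d p ^ 2 = -(π / B) ^ 2 := fun p hp => by
    rw [pd_kcot_snd _ hp]; ring
  have hGx : pd (1, 0) G = fun p => pd (0, 1) (pd (1, 0) u) p - d p * pd (1, 0) u p := by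
    ext p
    by_cases hp : p ∈ Set.Ioo (0 : ℝ) A ×ˢ Set.Ioo (0 : ℝ) B
    · have hdp : DifferentiableAt ℝ d p :=
        (hd.contDiffAt (hΩ.mem_nhds hp)).differentiableAt (by simp)
      have hdx : pd (1, 0) d p = 0 := by rw [pd_kcot_snd _ hp]; simp
      rw [pd_sub _ ((hu.pd _).differentiable p) (hdu.differentiable p),
        pd_mul _ hdp (hu.differentiable p), pd_comm hu.1, hdx]
      ring
    · simp [(hG.pd _).eq_zero hp, ((hu.pd (1, 0)).pd (0, 1)).eq_zero hp,
        (hu.pd (1, 0)).eq_zero hp]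
  rw [hGx, (hu.pd (1, 0)).integral_riccati hΩ hd hr, hu.integral_riccati hΩ hd hr] at hG0
  unfold uxy
  linarith

end Rectangle

lemma Adm.integral_lap_sq {Ω : Set (ℝ × ℝ)} {u : ℝ × ℝ → ℝ} (hu : Adm Ω u) :
    ∫ p, lap u p ^ 2 =
      (∫ p, uxx u p ^ 2) + 2 * (∫ p, uxy u p ^ 2) + ∫ p, uyy u p ^ 2 := by
  have hx := hu.pd (1, 0)
  have hxx : Adm Ω (uxx u) := hx.pd (1, 0)
  have hxy : Adm Ω (uxy u) := hx.pd (0, 1)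
  have hyy : Adm Ω (uyy u) := (hu.pd (0, 1)).pd (0, 1)
  have hthird : pd (1, 0) (uyy u) = pd (0, 1) (uxy u) := by
    unfold uyy uxy
    rw [pd_comm (hu.pd _).1, pd_comm hu.1]
  have h1 := hx.mul hyy
  have h2 := hx.mul hxy
  have hpt : ∀ p, lap u p ^ 2 = uxx u p ^ 2 + 2 * uxy u p ^ 2 + uyy u p ^ 2 +
      2 * (pd (1, 0) (fun q => pd (1, 0) u q * uyy u q) p -
        pd (0, 1) (fun q => pd (1, 0) u q * uxy u q) p) := by
    intro p
    rw [pd_mul _ (hx.differentiable p) (hyy.differentiable p),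
      pd_mul _ (hx.differentiable p) (hxy.differentiable p), hthird]
    simp only [lap, uxx, uxy]
    ring
  have i1 := (h1.pd (1, 0)).integrable
  have i2 := (h2.pd (0, 1)).integrable
  have i3 : Integrable fun p => pd (1, 0) (fun q => pd (1, 0) u q * uyy u q) p -
      pd (0, 1) (fun q => pd (1, 0) u q * uxy u q) p := i1.sub i2
  simp_rw [hpt]
  rw [integral_add ((hxx.sq.integrable.fun_add (hxy.sq.integrable.const_mul 2)).fun_add
      hyy.sq.integrable) (i3.const_mul 2),
    integral_add (hxx.sq.integrable.fun_add (hxy.sq.integrable.const_mul 2)) hyy.sq.integrable,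
    integral_add hxx.sq.integrable (hxy.sq.integrable.const_mul 2), integral_const_mul,
    integral_const_mul, integral_sub i1 i2, h1.integral_pd, h2.integral_pd]
  ring

/-- The variational inequality for `rho`, rescaled to the interval `(0, L)`. -/
lemma rho_mul_integral_sq_le {α L : ℝ} (hα : 0 ≤ α) (hL : 0 < L) {f : ℝ → ℝ}
    (hf : ContDiff ℝ (⊤ : ℕ∞) f) (hs : tsupport f ⊆ Set.Ioo 0 L) :
    rho α * (∫ x, f x ^ 2) ≤
      L ^ 4 * (∫ x, deriv (deriv f) x ^ 2) + 2 * α * L ^ 2 * ∫ x, deriv f x ^ 2 := by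
  have hN0 : 0 ≤ ∫ x, f x ^ 2 := integral_nonneg fun x => sq_nonneg _
  have h1 : 0 ≤ ∫ x, deriv f x ^ 2 := integral_nonneg fun x => sq_nonneg _
  have h2 : 0 ≤ ∫ x, deriv (deriv f) x ^ 2 := integral_nonneg fun x => sq_nonneg _
  rcases hN0.eq_or_lt with hN | hN
  · rw [← hN]; simp only [mul_zero]; positivity
  set N := ∫ x, f x ^ 2
  set K := √(L / N)
  have hK : K ^ 2 = L / N := sq_sqrt (by positivity)
  set v : ℝ → ℝ := fun s => K * f (L * s)
  have hv' : deriv v = fun s => K * (L * deriv f (L * s)) := by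
    ext s
    simp only [v, deriv_const_mul_field, deriv_comp_mul_left, smul_eq_mul]
  have hv'' : deriv (deriv v) = fun s => K * (L * (L * deriv (deriv f) (L * s))) := by
    ext s
    simp only [hv', deriv_const_mul_field, deriv_comp_mul_left, smul_eq_mul]
  have hvs : tsupport v ⊆ Set.Ioo 0 1 := by
    refine (tsupport_mul_subset_right (f := fun _ : ℝ => K)).trans fun s hs' => ?_
    have := hs (tsupport_comp_subset_preimage f (continuous_const_mul L) hs')
    exact ⟨pos_of_mul_pos_right this.1 hL.le, by nlinarith [this.2]⟩
  have hvA : Adm1 v :=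
    ⟨contDiff_const.mul (hf.comp (contDiff_const.mul contDiff_id)),
      isCompact_Icc.of_isClosed_subset (isClosed_tsupport v)
        (hvs.trans Set.Ioo_subset_Icc_self), hvs⟩
  have hint : ∀ g : ℝ → ℝ, tsupport g ⊆ tsupport v →
      ∫ x in (0 : ℝ)..1, g x ^ 2 = ∫ x, g x ^ 2 := fun g hg =>
    intervalIntegral.integral_eq_integral_of_support_subset fun x hx =>
      Set.Ioo_subset_Ioc_self (hvs (hg (subset_tsupport g (by
        intro h0; exact hx (by simp [h0])))))
  have hscale : ∀ g : ℝ → ℝ, ∫ s, (g (L * s)) ^ 2 = L⁻¹ * ∫ x, g x ^ 2 := fun g => by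
    rw [Measure.integral_comp_mul_left (fun x => g x ^ 2) L, abs_of_pos (inv_pos.2 hL),
      smul_eq_mul]
  have e0 : ∫ x in (0 : ℝ)..1, v x ^ 2 = 1 := by
    rw [hint v subset_rfl]
    simp only [v, mul_pow, integral_const_mul, hscale, hK]
    field_simp
    rfl
  have e1 : ∫ x in (0 : ℝ)..1, deriv v x ^ 2 = L ^ 2 / N * ∫ x, deriv f x ^ 2 := by
    rw [hint _ (tsupport_deriv_subset), hv']
    simp only [mul_pow, integral_const_mul, hscale, hK]
    field_simp
  have e2 : ∫ x in (0 : ℝ)..1, deriv (deriv v) x ^ 2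
      = L ^ 4 / N * ∫ x, deriv (deriv f) x ^ 2 := by
    rw [hint _ ((tsupport_deriv_subset).trans (tsupport_deriv_subset)), hv'']
    simp only [mul_pow, integral_const_mul, hscale, hK]
    field_simp
  have hle : rho α ≤ L ^ 4 / N * (∫ x, deriv (deriv f) x ^ 2) +
      2 * α * (L ^ 2 / N * ∫ x, deriv f x ^ 2) := by
    refine csInf_le ⟨0, ?_⟩ ⟨v, hvA, e0, by rw [e1, e2]⟩
    rintro r ⟨g, -, -, rfl⟩
    exact add_nonneg (intervalIntegral.integral_nonneg zero_le_one fun x _ => sq_nonneg _)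
      (mul_nonneg (by positivity)
        (intervalIntegral.integral_nonneg zero_le_one fun x _ => sq_nonneg _))
  calc rho α * N ≤ (L ^ 4 / N * (∫ x, deriv (deriv f) x ^ 2) +
      2 * α * (L ^ 2 / N * ∫ x, deriv f x ^ 2)) * N := mul_le_mul_of_nonneg_right hle hN.le
    _ = _ := by field_simp

lemma deriv_slice_fst {u : ℝ × ℝ → ℝ} (hu : Differentiable ℝ u) (y : ℝ) :
    deriv (fun x => u (x, y)) = fun x => pd (1, 0) u (x, y) := by
  ext x
  exact ((hu (x, y)).hasFDerivAt.comp_hasDerivAt x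
    ((hasDerivAt_id x).prodMk (hasDerivAt_const x y))).deriv

lemma deriv_slice_snd {u : ℝ × ℝ → ℝ} (hu : Differentiable ℝ u) (x : ℝ) :
    deriv (fun y => u (x, y)) = fun y => pd (0, 1) u (x, y) := by
  ext y
  exact ((hu (x, y)).hasFDerivAt.comp_hasDerivAt y
    ((hasDerivAt_const y x).prodMk (hasDerivAt_id y))).deriv

section Slices

variable {A B α : ℝ} {u : ℝ × ℝ → ℝ}

lemma Adm.rho_mul_integral_sq_le_fst (hu : Adm (Set.Ioo 0 A ×ˢ Set.Ioo 0 B) u) (hA : 0 < A)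
    (hα : 0 ≤ α) :
    rho α * (∫ p, u p ^ 2) ≤
      A ^ 4 * (∫ p, uxx u p ^ 2) + 2 * α * A ^ 2 * ∫ p, pd (1, 0) u p ^ 2 := by
  have hx := hu.pd (1, 0)
  have hxx : Adm _ (uxx u) := hx.pd (1, 0)
  rw [← integral_const_mul, ← integral_const_mul, ← integral_const_mul,
    ← integral_add (hxx.sq.integrable.const_mul _) (hx.sq.integrable.const_mul _)]
  have i0 := hu.sq.integrable
  have i1 := hx.sq.integrable
  have i2 := hxx.sq.integrable
  have iL := i0.const_mul (rho α)
  have iR := (i2.const_mul (A ^ 4)).fun_add (i1.const_mul (2 * α * A ^ 2))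
  rw [Measure.volume_eq_prod] at i0 i1 i2 iL iR ⊢
  rw [integral_prod_symm _ iL, integral_prod_symm _ iR]
  refine integral_mono_ae iL.integral_prod_right iR.integral_prod_right ?_
  filter_upwards [i1.prod_left_ae, i2.prod_left_ae] with y j1 j2
  have h := rho_mul_integral_sq_le hα hA (f := fun x => u (x, y))
    (hu.1.comp (contDiff_id.prodMk contDiff_const)) fun x hx =>
      (hu.2.2 (tsupport_comp_subset_preimage u
        (continuous_id.prodMk (continuous_const (y := y))) hx)).1
  rw [deriv_slice_fst hu.differentiable, deriv_slice_fst hx.differentiable] at h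
  rw [integral_add (j2.const_mul _) (j1.const_mul _), integral_const_mul, integral_const_mul,
    integral_const_mul]
  exact h

lemma Adm.rho_mul_integral_sq_le_snd (hu : Adm (Set.Ioo 0 A ×ˢ Set.Ioo 0 B) u) (hB : 0 < B)
    (hα : 0 ≤ α) :
    rho α * (∫ p, u p ^ 2) ≤
      B ^ 4 * (∫ p, uyy u p ^ 2) + 2 * α * B ^ 2 * ∫ p, pd (0, 1) u p ^ 2 := by
  have hy := hu.pd (0, 1)
  have hyy : Adm _ (uyy u) := hy.pd (0, 1)
  rw [← integral_const_mul, ← integral_const_mul, ← integral_const_mul,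
    ← integral_add (hyy.sq.integrable.const_mul _) (hy.sq.integrable.const_mul _)]
  have i0 := hu.sq.integrable
  have i1 := hy.sq.integrable
  have i2 := hyy.sq.integrable
  have iL := i0.const_mul (rho α)
  have iR := (i2.const_mul (B ^ 4)).fun_add (i1.const_mul (2 * α * B ^ 2))
  rw [Measure.volume_eq_prod] at i0 i1 i2 iL iR ⊢
  rw [integral_prod _ iL, integral_prod _ iR]
  refine integral_mono_ae iL.integral_prod_left iR.integral_prod_left ?_
  filter_upwards [i1.prod_right_ae, i2.prod_right_ae] with x j1 j2
  have h := rho_mul_integral_sq_le hα hB (f := fun y => u (x, y))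
    (hu.1.comp (contDiff_const.prodMk contDiff_id)) fun y hy =>
      (hu.2.2 (tsupport_comp_subset_preimage u
        ((continuous_const (y := x)).prodMk continuous_id) hy)).2
  rw [deriv_slice_snd hu.differentiable, deriv_slice_snd hy.differentiable] at h
  rw [integral_add (j2.const_mul _) (j1.const_mul _), integral_const_mul, integral_const_mul,
    integral_const_mul]
  exact h

end Slices

lemma exists_adm_ne_zero {a : ℝ} (ha : 0 < a) : ∃ u, Adm (Rect a) u ∧ u ≠ 0 := by
  have hmem : (a / 2, 1 / a / 2) ∈ Rect a := by
    have : 0 < 1 / a := by positivity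
    exact ⟨⟨by positivity, by simpa using ha⟩, ⟨by positivity, half_lt_self this⟩⟩
  obtain ⟨u, hs, hc, hd, -, h1⟩ := exists_contDiff_tsupport_subset (n := (⊤ : ℕ∞))
    ((isOpen_Ioo.prod isOpen_Ioo).mem_nhds hmem)
  exact ⟨u, ⟨hd, hc, hs⟩, fun h => by simp [h] at h1⟩

/-- Owen's lower bound: `λ₁(a) ≥ ρ(π²a⁴)a⁻⁴ + ρ(π²a⁻⁴)a⁴ − 2π⁴` for `a ≥ 1`. -/
theorem first_eigenvalue_owen_lower_bound (a : ℝ) (ha : 1 ≤ a) :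
    lam1 a ≥ rho (π ^ 2 * a ^ 4) * a ^ (-4 : ℤ)
      + rho (π ^ 2 * a ^ (-4 : ℤ)) * a ^ 4 - 2 * π ^ 4 := by
  have ha0 : 0 < a := by linarith
  obtain ⟨u₀, hu₀, hne₀⟩ := exists_adm_ne_zero ha0
  refine le_csInf ⟨_, u₀, hu₀, hne₀, rfl⟩ ?_
  rintro μ ⟨u, hu, hne, rfl⟩
  obtain ⟨p₀, hp₀⟩ := Function.ne_iff.1 hne
  have hpos : 0 < ∫ p, u p ^ 2 :=
    hu.sq.1.continuous.integral_pos_of_hasCompactSupport_nonneg_nonzero hu.sq.2.1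
      (fun p => sq_nonneg (u p)) (x := p₀) (pow_ne_zero 2 hp₀)
  rw [le_div_iff₀ hpos, hu.integral_lap_sq]
  have hz : a ^ (-4 : ℤ) = (a ^ 4)⁻¹ := by rw [zpow_neg]; norm_cast
  rw [hz]
  have hX := hu.rho_mul_integral_sq_le_fst ha0 (α := π ^ 2 * a ^ 4) (by positivity)
  have hY := hu.rho_mul_integral_sq_le_snd (one_div_pos.2 ha0) (α := π ^ 2 * (a ^ 4)⁻¹)
    (by positivity)
  have hXY := hu.integral_uxy_sq_ge
  replace hX := mul_le_mul_of_nonneg_left hX (a := (a ^ 4)⁻¹) (by positivity)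
  replace hY := mul_le_mul_of_nonneg_left hY (a := a ^ 4) (by positivity)
  set N := ∫ p, u p ^ 2
  set X₁ := ∫ p, pd (1, 0) u p ^ 2
  set Y₁ := ∫ p, pd (0, 1) u p ^ 2
  set X₂ := ∫ p, uxx u p ^ 2
  set Y₂ := ∫ p, uyy u p ^ 2
  have eX : (a ^ 4)⁻¹ * (a ^ 4 * X₂ + 2 * (π ^ 2 * a ^ 4) * a ^ 2 * X₁)
      = X₂ + 2 * (π ^ 2 * a ^ 2 * X₁) := by field_simp
  have eY : a ^ 4 * ((1 / a) ^ 4 * Y₂ + 2 * (π ^ 2 * (a ^ 4)⁻¹) * (1 / a) ^ 2 * Y₁)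
      = Y₂ + 2 * (π ^ 2 / a ^ 2 * Y₁) := by field_simp
  have eXY : (π / (1 / a)) ^ 2 * X₁ + (π / a) ^ 2 * Y₁ - (π / a) ^ 2 * (π / (1 / a)) ^ 2 * N
      = π ^ 2 * a ^ 2 * X₁ + π ^ 2 / a ^ 2 * Y₁ - π ^ 4 * N := by field_simp
  rw [eX] at hX
  rw [eY] at hY
  rw [eXY] at hXY
  linarith
end
end

section
/- The function L(a) = ρ(π²a⁴)·a⁻⁴ + ρ(π²a⁻⁴)·a⁴ − 2π⁴ is strictly increasing in a for a > 1: if 1 < a < b then L(a) < L(b). -/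
open MeasureTheory Real Filter

noncomputable section


/-- The function `L(a) = ρ(π²a⁴)a⁻⁴ + ρ(π²a⁻⁴)a⁴ − 2π⁴`. -/
def Lfun (a : ℝ) : ℝ :=
  rho (π ^ 2 * a ^ 4) * a ^ (-4 : ℤ) + rho (π ^ 2 * a ^ (-4 : ℤ)) * a ^ 4 - 2 * π ^ 4

/-- A solution `y` of `y'''' = c y'' + μ y` on `(0,1)` with clamped boundary values, positive in the
interior, whose Picone potential `2y'² - 4yy'' + cy²` is nonnegative. -/
structure ClampedMode (c μ : ℝ) (y y₁ y₂ y₃ : ℝ → ℝ) : Prop where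
  contDiff : ContDiff ℝ (⊤ : ℕ∞) y
  deriv_zero : ∀ x, HasDerivAt y (y₁ x) x
  deriv_one : ∀ x, HasDerivAt y₁ (y₂ x) x
  deriv_two : ∀ x, HasDerivAt y₂ (y₃ x) x
  deriv_three : ∀ x, HasDerivAt y₃ (c * y₂ x + μ * y x) x
  left : y 0 = 0
  right : y 1 = 0
  left' : y₁ 0 = 0
  right' : y₁ 1 = 0
  pos : ∀ x ∈ Set.Ioo (0 : ℝ) 1, 0 < y x
  potential_nonneg : ∀ x ∈ Set.Icc (0 : ℝ) 1,
    0 ≤ 2 * y₁ x ^ 2 - 4 * y x * y₂ x + c * y x ^ 2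

namespace ClampedMode

variable {c μ : ℝ} {y y₁ y₂ y₃ : ℝ → ℝ}

lemma continuous_zero (h : ClampedMode c μ y y₁ y₂ y₃) : Continuous y :=
  continuous_iff_continuousAt.2 fun x => (h.deriv_zero x).continuousAt

lemma continuous_one (h : ClampedMode c μ y y₁ y₂ y₃) : Continuous y₁ :=
  continuous_iff_continuousAt.2 fun x => (h.deriv_one x).continuousAt

lemma continuous_two (h : ClampedMode c μ y y₁ y₂ y₃) : Continuous y₂ :=
  continuous_iff_continuousAt.2 fun x => (h.deriv_two x).continuousAt

lemma continuous_three (h : ClampedMode c μ y y₁ y₂ y₃) : Continuous y₃ :=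
  continuous_iff_continuousAt.2 fun x => (h.deriv_three x).continuousAt

/-- Picone-type identity for the quadratic form of `v'''' - c v'' - μ v` at `v = y u`. -/
lemma picone (h : ClampedMode c μ y y₁ y₂ y₃) {u u₁ u₂ : ℝ → ℝ}
    (hu : ∀ x, HasDerivAt u (u₁ x) x) (hu₁ : ∀ x, HasDerivAt u₁ (u₂ x) x)
    (hu₂ : Continuous u₂) :
    (∫ x in (0 : ℝ)..1, (deriv (deriv fun x => y x * u x) x) ^ 2) +
        c * (∫ x in (0 : ℝ)..1, (deriv (fun x => y x * u x) x) ^ 2) =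
      μ * (∫ x in (0 : ℝ)..1, (y x * u x) ^ 2) +
        ∫ x in (0 : ℝ)..1, ((y x * u₂ x) ^ 2 +
          (2 * y₁ x ^ 2 - 4 * y x * y₂ x + c * y x ^ 2) * u₁ x ^ 2) := by
  have d1 : deriv (fun x => y x * u x) = fun x => y₁ x * u x + y x * u₁ x :=
    funext fun x => ((h.deriv_zero x).mul (hu x)).deriv
  have d2 : deriv (deriv fun x => y x * u x) =
      fun x => (y₂ x * u x + y₁ x * u₁ x) + (y₁ x * u₁ x + y x * u₂ x) := by
    rw [d1]
    exact funext fun x =>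
      (((h.deriv_one x).mul (hu x)).add ((h.deriv_zero x).mul (hu₁ x))).deriv
  have cu : Continuous u := continuous_iff_continuousAt.2 fun x => (hu x).continuousAt
  have cu₁ : Continuous u₁ := continuous_iff_continuousAt.2 fun x => (hu₁ x).continuousAt
  have c0 := h.continuous_zero
  have c1 := h.continuous_one
  have c2 := h.continuous_two
  have c3 := h.continuous_three
  set Ψ : ℝ → ℝ := fun x => 2 * (y x * y₁ x) * (u₁ x * u₁ x) + 2 * (y x * y₂ x) * (u x * u₁ x) +
    (y₁ x * y₂ x - y x * y₃ x + c * (y x * y₁ x)) * (u x * u x) with hΨ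
  set Ψ' : ℝ → ℝ := fun x => (y₂ x * u x + y₁ x * u₁ x + (y₁ x * u₁ x + y x * u₂ x)) ^ 2 +
    c * (y₁ x * u x + y x * u₁ x) ^ 2 - (μ * (y x * u x) ^ 2 + ((y x * u₂ x) ^ 2 +
          (2 * y₁ x ^ 2 - 4 * y x * y₂ x + c * y x ^ 2) * u₁ x ^ 2)) with hΨ'
  have hd : ∀ x, HasDerivAt Ψ (Ψ' x) x := by
    intro x
    have a0 := h.deriv_zero x
    have a1 := h.deriv_one x
    have a2 := h.deriv_two x
    have a3 := h.deriv_three x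
    have b0 := hu x
    have b1 := hu₁ x
    refine HasDerivAt.congr_deriv (((((a0.mul a1).const_mul 2).mul (b1.mul b1)).add
      (((a0.mul a2).const_mul 2).mul (b0.mul b1))).add
      ((((a1.mul a2).sub (a0.mul a3)).add ((a0.mul a1).const_mul c)).mul (b0.mul b0))) ?_
    simp only [hΨ', Pi.mul_apply, Pi.add_apply, Pi.sub_apply]
    ring
  have hcont : Continuous Ψ' := by simp only [hΨ']; fun_prop
  have h_zero : ∫ x in (0 : ℝ)..1, Ψ' x = 0 := by
    rw [intervalIntegral.integral_eq_sub_of_hasDerivAt (fun x _ => hd x)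
      (hcont.intervalIntegrable _ _)]
    simp [hΨ, h.left, h.right, h.left', h.right']
  rw [d2, d1]
  have ii : ∀ f : ℝ → ℝ, Continuous f → IntervalIntegrable f volume 0 1 :=
    fun f hf => hf.intervalIntegrable _ _
  simp only [hΨ'] at h_zero
  rw [intervalIntegral.integral_sub (ii _ (by fun_prop)) (ii _ (by fun_prop)),
    intervalIntegral.integral_add (ii _ (by fun_prop)) (ii _ (by fun_prop)),
    intervalIntegral.integral_add (ii _ (by fun_prop)) (ii _ (by fun_prop)),
    intervalIntegral.integral_const_mul, intervalIntegral.integral_const_mul] at h_zero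
  linarith

lemma le_energy (h : ClampedMode c μ y y₁ y₂ y₃) {v : ℝ → ℝ} (hv : Adm1 v) :
    μ * (∫ x in (0 : ℝ)..1, (v x) ^ 2) ≤
      (∫ x in (0 : ℝ)..1, (deriv (deriv v) x) ^ 2) +
        c * (∫ x in (0 : ℝ)..1, (deriv v x) ^ 2) := by
  obtain ⟨hs, -, hsub⟩ := hv
  have hzero : ∀ x, x ∉ tsupport v → v x = 0 := fun x hx => image_eq_zero_of_notMem_tsupport hx
  have hu : ContDiff ℝ (⊤ : ℕ∞) (fun x => v x / y x) := by
    rw [contDiff_iff_contDiffAt]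
    intro x
    by_cases hx : x ∈ tsupport v
    · exact hs.contDiffAt.div h.contDiff.contDiffAt (h.pos x (hsub hx)).ne'
    · have : (fun x => v x / y x) =ᶠ[nhds x] fun _ => 0 := by
        filter_upwards [(isClosed_tsupport v).isOpen_compl.mem_nhds hx] with z hz
        simp [hzero z hz]
      exact contDiffAt_const.congr_of_eventuallyEq this
  have hvu : v = fun x => y x * (v x / y x) := by
    funext x
    by_cases hx : x ∈ tsupport v
    · have := (h.pos x (hsub hx)).ne'
      field_simp
    · simp [hzero x hx]
  set u : ℝ → ℝ := fun x => v x / y x with hudef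
  have hu' : ContDiff ℝ (⊤ : ℕ∞) (deriv u) := (contDiff_infty_iff_deriv.1 hu).2
  have hu'' : ContDiff ℝ (⊤ : ℕ∞) (deriv (deriv u)) := (contDiff_infty_iff_deriv.1 hu').2
  have key := h.picone (u := u) (u₁ := deriv u) (u₂ := deriv (deriv u))
    (fun x => (hu.differentiable (by simp)).differentiableAt.hasDerivAt)
    (fun x => (hu'.differentiable (by simp)).differentiableAt.hasDerivAt) hu''.continuous
  have hn : 0 ≤ ∫ x in (0 : ℝ)..1, ((y x * deriv (deriv u) x) ^ 2 +
          (2 * y₁ x ^ 2 - 4 * y x * y₂ x + c * y x ^ 2) * deriv u x ^ 2) := by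
    refine intervalIntegral.integral_nonneg zero_le_one fun x hx => ?_
    have := h.potential_nonneg x hx
    positivity
  have hvu' : (fun x => y x * u x) = v := hvu.symm
  have hvu'' : ∀ x, y x * u x = v x := fun x => congrFun hvu' x
  rw [hvu'] at key
  simp only [hvu''] at key
  linarith

end ClampedMode

lemma abs_le_mul_of_deriv_bound {f f' : ℝ → ℝ} (hf : ∀ x, HasDerivAt f (f' x) x) (h0 : f 0 = 0)
    (h1 : f 1 = 0) {B : ℝ} {k : ℕ}
    (hB : ∀ x ∈ Set.Icc (0 : ℝ) 1, |f' x| ≤ B * (x * (1 - x)) ^ k) (hB0 : 0 ≤ B) :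
    ∀ x ∈ Set.Icc (0 : ℝ) 1, |f x| ≤ B * 2 ^ (k + 1) * (x * (1 - x)) ^ (k + 1) := by
  intro x hx
  obtain ⟨hx0, hx1⟩ := hx
  rcases le_total x (1 / 2) with h | h
  · have := Convex.norm_image_sub_le_of_norm_hasDerivWithin_le (f := f) (f' := f')
      (C := B * x ^ k) (s := Set.Icc 0 x) (x := 0) (y := x)
      (fun z _ => (hf z).hasDerivWithinAt) (fun z hz => ?_) (convex_Icc 0 x)
      (Set.left_mem_Icc.2 hx0) (Set.right_mem_Icc.2 hx0)
    · rw [h0, sub_zero, sub_zero, Real.norm_eq_abs, Real.norm_eq_abs, abs_of_nonneg hx0] at this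
      refine this.trans ?_
      have e : B * x ^ k * x = B * x ^ (k + 1) := by ring
      rw [e, mul_assoc, ← mul_pow]
      gcongr
      nlinarith
    · rw [Real.norm_eq_abs]
      refine (hB z ⟨hz.1, hz.2.trans hx1⟩).trans ?_
      have h2 : 0 ≤ z * (1 - z) := mul_nonneg hz.1 (by linarith [hz.2])
      have h3 : z * (1 - z) ≤ x := by nlinarith [hz.1, hz.2]
      gcongr
  · have := Convex.norm_image_sub_le_of_norm_hasDerivWithin_le (f := f) (f' := f')
      (C := B * (1 - x) ^ k) (s := Set.Icc x 1) (x := 1) (y := x)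
      (fun z _ => (hf z).hasDerivWithinAt) (fun z hz => ?_) (convex_Icc x 1)
      (Set.right_mem_Icc.2 hx1) (Set.left_mem_Icc.2 hx1)
    · rw [h1, sub_zero, Real.norm_eq_abs, Real.norm_eq_abs, abs_sub_comm,
        abs_of_nonneg (sub_nonneg.2 hx1)] at this
      refine this.trans ?_
      have e : B * (1 - x) ^ k * (1 - x) = B * (1 - x) ^ (k + 1) := by ring
      rw [e, mul_assoc, ← mul_pow]
      have := sub_nonneg.2 hx1
      gcongr
      nlinarith
    · rw [Real.norm_eq_abs]
      refine (hB z ⟨hx0.trans hz.1, hz.2⟩).trans ?_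
      have h2 : 0 ≤ z * (1 - z) := mul_nonneg (hx0.trans hz.1) (by linarith [hz.2])
      have h3 : z * (1 - z) ≤ 1 - x := by nlinarith [hz.1, hz.2]
      gcongr

/-- The smooth step `t ↦ smoothTransition (t - 1)`, equal to `0` for `t ≤ 1` and `1` for `t ≥ 2`. -/
def smoothStep (t : ℝ) : ℝ := smoothTransition (t - 1)

lemma contDiff_smoothStep : ContDiff ℝ (⊤ : ℕ∞) smoothStep :=
  smoothTransition.contDiff.comp (contDiff_id.sub contDiff_const)

lemma smoothStep_eventuallyEq_of_lt_one {t : ℝ} (ht : t < 1) : smoothStep =ᶠ[nhds t] fun _ => 0 := by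
  filter_upwards [Iio_mem_nhds ht] with z hz
  exact smoothTransition.zero_of_nonpos (by linarith [Set.mem_Iio.1 hz])

lemma smoothStep_eventuallyEq_of_two_lt {t : ℝ} (ht : 2 < t) : smoothStep =ᶠ[nhds t] fun _ => 1 := by
  filter_upwards [Ioi_mem_nhds ht] with z hz
  exact smoothTransition.one_of_one_le (by linarith [Set.mem_Ioi.1 hz])

lemma deriv_smoothStep_eventuallyEq {t : ℝ} (ht : t < 1 ∨ 2 < t) :
    deriv smoothStep =ᶠ[nhds t] fun _ => 0 := by
  rcases ht with ht | ht
  · simpa using (smoothStep_eventuallyEq_of_lt_one ht).deriv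
  · simpa using (smoothStep_eventuallyEq_of_two_lt ht).deriv

lemma deriv_smoothStep_eq_zero {t : ℝ} (ht : t < 1 ∨ 2 < t) : deriv smoothStep t = 0 :=
  (deriv_smoothStep_eventuallyEq ht).eq_of_nhds

lemma deriv_deriv_smoothStep_eq_zero {t : ℝ} (ht : t < 1 ∨ 2 < t) :
    deriv (deriv smoothStep) t = 0 := by
  simpa using (deriv_smoothStep_eventuallyEq ht).deriv_eq

lemma contDiff_deriv_smoothStep : ContDiff ℝ (⊤ : ℕ∞) (deriv smoothStep) :=
  (contDiff_infty_iff_deriv.1 contDiff_smoothStep).2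

lemma continuous_deriv_deriv_smoothStep : Continuous (deriv (deriv smoothStep)) :=
  (contDiff_infty_iff_deriv.1 contDiff_deriv_smoothStep).2.continuous

lemma exists_bound_of_eq_zero {f : ℝ → ℝ} (hf : Continuous f)
    (h : ∀ t, t < 1 ∨ 2 < t → f t = 0) : ∃ B, 0 ≤ B ∧ ∀ t, |f t| ≤ B := by
  have hc : HasCompactSupport f := by
    refine HasCompactSupport.intro (isCompact_Icc (a := (1 : ℝ)) (b := 2)) fun t ht => h t ?_
    rw [Set.mem_Icc, not_and_or, not_le, not_le] at ht
    exact ht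
  obtain ⟨B, hB⟩ := hf.bounded_above_of_compact_support hc
  exact ⟨B, (norm_nonneg _).trans (hB 0), hB⟩

lemma exists_bound_Icc {f : ℝ → ℝ} (hf : Continuous f) :
    ∃ B, 0 ≤ B ∧ ∀ x ∈ Set.Icc (0 : ℝ) 1, |f x| ≤ B := by
  obtain ⟨B, hB⟩ := (isCompact_Icc (a := (0 : ℝ)) (b := 1)).exists_bound_of_continuousOn
    hf.continuousOn
  exact ⟨B, (norm_nonneg _).trans (hB 0 (by simp)), hB⟩

/-- Cutoff functions exhausting `(0,1)`. -/
def cutoff (n x : ℝ) : ℝ := smoothStep (n * (x * (1 - x)))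

/-- First derivative of `cutoff`. -/
def cutoff₁ (n x : ℝ) : ℝ := deriv smoothStep (n * (x * (1 - x))) * (n * (1 - 2 * x))

/-- Second derivative of `cutoff`. -/
def cutoff₂ (n x : ℝ) : ℝ := deriv (deriv smoothStep) (n * (x * (1 - x))) * (n * (1 - 2 * x)) ^ 2 -
  deriv smoothStep (n * (x * (1 - x))) * (2 * n)

lemma hasDerivAt_bump (n x : ℝ) :
    HasDerivAt (fun x : ℝ => n * (x * (1 - x))) (n * (1 - 2 * x)) x := by
  refine (((hasDerivAt_id x).mul ((hasDerivAt_id x).const_sub 1)).const_mul n).congr_deriv ?_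
  simp only [id]
  ring

lemma hasDerivAt_cutoff (n x : ℝ) : HasDerivAt (cutoff n) (cutoff₁ n x) x :=
  HasDerivAt.comp x
    (contDiff_smoothStep.differentiable (by simp)).differentiableAt.hasDerivAt (hasDerivAt_bump n x)

lemma hasDerivAt_cutoff₁ (n x : ℝ) : HasDerivAt (cutoff₁ n) (cutoff₂ n x) x := by
  have h1 : HasDerivAt (fun x => deriv smoothStep (n * (x * (1 - x)))) _ x := HasDerivAt.comp x
    (contDiff_deriv_smoothStep.differentiable (by simp)).differentiableAt.hasDerivAt
    (hasDerivAt_bump n x)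
  have h2 : HasDerivAt (fun x : ℝ => n * (1 - 2 * x)) (n * (-(2 * 1))) x :=
    (((hasDerivAt_id x).const_mul 2).const_sub 1).const_mul n
  refine (h1.mul h2).congr_deriv ?_
  simp only [cutoff₂]
  ring

lemma continuous_cutoff₁ (n : ℝ) : Continuous (cutoff₁ n) :=
  continuous_iff_continuousAt.2 fun x => (hasDerivAt_cutoff₁ n x).continuousAt

lemma continuous_cutoff (n : ℝ) : Continuous (cutoff n) :=
  continuous_iff_continuousAt.2 fun x => (hasDerivAt_cutoff n x).continuousAt

lemma continuous_cutoff₂ (n : ℝ) : Continuous (cutoff₂ n) := by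
  have h1 := continuous_deriv_deriv_smoothStep
  have h2 := contDiff_deriv_smoothStep.continuous
  unfold cutoff₂
  fun_prop

lemma contDiff_cutoff (n : ℝ) : ContDiff ℝ (⊤ : ℕ∞) (cutoff n) :=
  contDiff_smoothStep.comp (by fun_prop)

lemma abs_cutoff_le_one (n x : ℝ) : |cutoff n x| ≤ 1 :=
  abs_le.2 ⟨by linarith [smoothTransition.nonneg (n * (x * (1 - x)) - 1), show cutoff n x =
    smoothTransition (n * (x * (1 - x)) - 1) from rfl], smoothTransition.le_one _⟩

lemma adm1_mul_cutoff {y : ℝ → ℝ} (hy : ContDiff ℝ (⊤ : ℕ∞) y) {n : ℝ} (hn : 0 < n) :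
    Adm1 fun x => y x * cutoff n x := by
  have hsub : Function.support (fun x => y x * cutoff n x) ⊆ {x | 1 ≤ n * (x * (1 - x))} := by
    intro x hx
    by_contra hlt
    rw [Set.mem_ofPred_eq] at hlt
    refine hx ?_
    have : cutoff n x = 0 :=
      smoothTransition.zero_of_nonpos (by linarith [not_le.1 hlt])
    simp [this]
  have hcl : IsClosed {x : ℝ | 1 ≤ n * (x * (1 - x))} :=
    isClosed_le continuous_const (by fun_prop)
  have hts : tsupport (fun x => y x * cutoff n x) ⊆ Set.Ioo 0 1 := by
    refine (closure_minimal hsub hcl).trans fun x hx => ?_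
    have hx' : 0 < n * (x * (1 - x)) := lt_of_lt_of_le one_pos hx
    have hw : 0 < x * (1 - x) := (mul_pos_iff_of_pos_left hn).1 hx'
    constructor <;> nlinarith
  refine ⟨hy.mul (contDiff_cutoff n), ?_, hts⟩
  exact HasCompactSupport.of_support_subset_isCompact (isCompact_Icc (a := (0 : ℝ)) (b := 1))
    ((subset_tsupport _).trans (hts.trans Set.Ioo_subset_Icc_self))

lemma eventually_two_lt_mul_bump {x : ℝ} (hx : x ∈ Set.Ioo (0 : ℝ) 1) :
    ∀ᶠ n : ℕ in atTop, 2 < ((n : ℝ) + 1) * (x * (1 - x)) := by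
  have hw : 0 < x * (1 - x) := mul_pos hx.1 (by linarith [hx.2])
  filter_upwards [(tendsto_natCast_atTop_atTop (R := ℝ)).eventually_gt_atTop (2 / (x * (1 - x)))]
    with n hn
  rw [div_lt_iff₀ hw] at hn
  nlinarith

lemma ae_mem_Ioo_of_mem_uIoc : ∀ᵐ x : ℝ, x ∈ Set.uIoc (0 : ℝ) 1 → x ∈ Set.Ioo (0 : ℝ) 1 := by
  have : ∀ᵐ x : ℝ, x ≠ 1 := by simp [ae_iff]
  filter_upwards [this] with x hx hm
  rw [Set.uIoc_of_le zero_le_one] at hm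
  exact ⟨hm.1, lt_of_le_of_ne hm.2 hx⟩

namespace ClampedMode

variable {c μ : ℝ} {y y₁ y₂ y₃ : ℝ → ℝ}

lemma tendsto_integral_mul_cutoff_sq (h : ClampedMode c μ y y₁ y₂ y₃) :
    Tendsto (fun n : ℕ => ∫ x in (0 : ℝ)..1, (y x * cutoff (n + 1) x) ^ 2) atTop
      (nhds (∫ x in (0 : ℝ)..1, y x ^ 2)) := by
  have cy := h.continuous_zero
  refine intervalIntegral.tendsto_integral_filter_of_dominated_convergence (fun x => y x ^ 2)
    ?_ ?_ ?_ ?_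
  · refine Eventually.of_forall fun n => Continuous.aestronglyMeasurable ?_
    have := continuous_cutoff (n + 1)
    fun_prop
  · refine Eventually.of_forall fun n => Eventually.of_forall fun x _ => ?_
    rw [Real.norm_eq_abs, abs_pow, abs_mul, ← sq_abs (y x), mul_pow]
    have h1 := abs_cutoff_le_one (n + 1) x
    have h2 : |cutoff (n + 1) x| ^ 2 ≤ 1 := pow_le_one₀ (abs_nonneg _) h1
    nlinarith [sq_nonneg (|y x|)]
  · exact Continuous.intervalIntegrable (by fun_prop) _ _
  · filter_upwards [ae_mem_Ioo_of_mem_uIoc] with x hx hm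
    refine tendsto_const_nhds.congr' ?_
    filter_upwards [eventually_two_lt_mul_bump (hx hm)] with n hn
    have : cutoff (n + 1) x = 1 := (smoothStep_eventuallyEq_of_two_lt hn).eq_of_nhds
    simp [this]

lemma tendsto_integral_potential (h : ClampedMode c μ y y₁ y₂ y₃) :
    Tendsto (fun n : ℕ => ∫ x in (0 : ℝ)..1, ((y x * cutoff₂ (n + 1) x) ^ 2 +
      (2 * y₁ x ^ 2 - 4 * y x * y₂ x + c * y x ^ 2) * cutoff₁ (n + 1) x ^ 2)) atTop (nhds 0) := by
  have c0 := h.continuous_zero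
  have c1 := h.continuous_one
  have c2 := h.continuous_two
  obtain ⟨B, hB0, hB⟩ := exists_bound_Icc c2
  have b1 := abs_le_mul_of_deriv_bound h.deriv_one h.left' h.right' (k := 0) (B := B)
    (by simpa using hB) hB0
  have b0 := abs_le_mul_of_deriv_bound h.deriv_zero h.left h.right b1 (by positivity)
  obtain ⟨M₁, hM₁0, hM₁⟩ := exists_bound_of_eq_zero (f := fun t => t * deriv smoothStep t)
    (continuous_id.mul contDiff_deriv_smoothStep.continuous)
    (fun t ht => by simp [deriv_smoothStep_eq_zero ht])
  obtain ⟨M₂, hM₂0, hM₂⟩ := exists_bound_of_eq_zero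
    (f := fun t => t ^ 2 * deriv (deriv smoothStep) t)
    ((continuous_id.pow 2).mul continuous_deriv_deriv_smoothStep)
    (fun t ht => by simp [deriv_deriv_smoothStep_eq_zero ht])
  norm_num at b1 b0
  set C : ℝ := B * 8 with hC
  have hC0 : 0 ≤ C := by positivity
  have hz : nhds (0 : ℝ) = nhds (∫ _ in (0 : ℝ)..1, (0 : ℝ)) := by simp
  rw [hz]
  refine intervalIntegral.tendsto_integral_filter_of_dominated_convergence
    (fun _ => (C * (M₂ + 2 * M₁)) ^ 2 + (2 * C ^ 2 + 4 * C * C + |c| * C ^ 2) * M₁ ^ 2) ?_ ?_ ?_ ?_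
  · refine Eventually.of_forall fun n => Continuous.aestronglyMeasurable ?_
    have := continuous_cutoff₁ (n + 1)
    have := continuous_cutoff₂ (n + 1)
    fun_prop
  · refine Eventually.of_forall fun n => ?_
    filter_upwards [ae_mem_Ioo_of_mem_uIoc] with x hx hm
    have hx := hx hm
    have hI : x ∈ Set.Icc (0 : ℝ) 1 := Set.Ioo_subset_Icc_self hx
    set w : ℝ := x * (1 - x) with hw
    have hw0 : 0 < w := mul_pos hx.1 (by linarith [hx.2])
    have hw1 : w ≤ 1 := by nlinarith [hx.1, hx.2]
    set m : ℝ := (n : ℝ) + 1 with hm'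
    have hm0 : 0 < m := by positivity
    have e0 : |y x| ≤ C * w ^ 2 := (b0 x hI.1 hI.2).trans (le_of_eq (by rw [hC]; ring))
    have e1 : |y₁ x| ≤ C * w := (b1 x hI.1 hI.2).trans (by rw [hC]; nlinarith)
    have e2 : |y₂ x| ≤ C := (hB x hI).trans (by linarith)
    have s1 := hM₁ (m * w)
    have s2 := hM₂ (m * w)
    simp only [abs_mul, abs_pow, abs_of_pos hw0, abs_of_pos hm0] at s1 s2
    have hl : |1 - 2 * x| ≤ 1 := abs_le.2 ⟨by linarith [hx.2], by linarith [hx.1]⟩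
    set t₁ := |deriv smoothStep (m * w)| with ht₁
    set t₂ := |deriv (deriv smoothStep) (m * w)| with ht₂
    have t₁0 : 0 ≤ t₁ := abs_nonneg _
    have t₂0 : 0 ≤ t₂ := abs_nonneg _
    have f1 : w * |cutoff₁ m x| ≤ M₁ := by
      have : |cutoff₁ m x| = t₁ * (m * |1 - 2 * x|) := by
        simp only [cutoff₁, abs_mul, abs_of_pos hm0, ht₁, hw]
      rw [this]
      calc w * (t₁ * (m * |1 - 2 * x|)) ≤ w * (t₁ * (m * 1)) := by gcongr
        _ = m * w * t₁ := by ring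
        _ ≤ M₁ := s1
    have f2 : w ^ 2 * |cutoff₂ m x| ≤ M₂ + 2 * M₁ := by
      have : |cutoff₂ m x| ≤ t₂ * (m * |1 - 2 * x|) ^ 2 + t₁ * (2 * m) := by
        refine (abs_sub _ _).trans (le_of_eq ?_)
        simp only [abs_mul, abs_pow, abs_of_pos hm0, ht₁, ht₂, hw, abs_two]
      calc w ^ 2 * |cutoff₂ m x| ≤ w ^ 2 * (t₂ * (m * 1) ^ 2 + t₁ * (2 * m)) := by
            refine mul_le_mul_of_nonneg_left (this.trans ?_) (by positivity)
            gcongr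
        _ = (m * w) ^ 2 * t₂ + 2 * (w * (m * w * t₁)) := by ring
        _ ≤ M₂ + 2 * (1 * M₁) := by gcongr
        _ = _ := by ring
    have g0 : |y x * cutoff₂ m x| ≤ C * (M₂ + 2 * M₁) := by
      rw [abs_mul]
      calc |y x| * |cutoff₂ m x| ≤ C * w ^ 2 * |cutoff₂ m x| := by gcongr
        _ = C * (w ^ 2 * |cutoff₂ m x|) := by ring
        _ ≤ _ := by gcongr
    have g1 : |2 * y₁ x ^ 2 - 4 * y x * y₂ x + c * y x ^ 2| ≤
        (2 * C ^ 2 + 4 * C * C + |c| * C ^ 2) * w ^ 2 := by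
      calc |2 * y₁ x ^ 2 - 4 * y x * y₂ x + c * y x ^ 2|
          ≤ 2 * |y₁ x| ^ 2 + 4 * |y x| * |y₂ x| + |c| * |y x| ^ 2 := by
            refine (abs_add_le _ _).trans (add_le_add ((abs_sub _ _).trans (le_of_eq ?_))
              (le_of_eq ?_))
            · simp only [abs_mul, abs_pow, abs_two]; norm_num
            · simp only [abs_mul, abs_pow]
        _ ≤ 2 * (C * w) ^ 2 + 4 * (C * w ^ 2) * C + |c| * (C * w) ^ 2 := by
            gcongr
            exact e0.trans (by nlinarith [mul_le_mul_of_nonneg_left hw1 hw0.le])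
        _ = _ := by ring
    have g2 : |(2 * y₁ x ^ 2 - 4 * y x * y₂ x + c * y x ^ 2) * cutoff₁ m x ^ 2| ≤
        (2 * C ^ 2 + 4 * C * C + |c| * C ^ 2) * M₁ ^ 2 := by
      rw [abs_mul, abs_pow]
      calc _ ≤ (2 * C ^ 2 + 4 * C * C + |c| * C ^ 2) * w ^ 2 * |cutoff₁ m x| ^ 2 := by gcongr
        _ = (2 * C ^ 2 + 4 * C * C + |c| * C ^ 2) * (w * |cutoff₁ m x|) ^ 2 := by ring
        _ ≤ _ := by gcongr
    rw [Real.norm_eq_abs]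
    refine (abs_add_le _ _).trans (add_le_add ?_ g2)
    rw [abs_pow]
    gcongr
  · exact intervalIntegrable_const
  · filter_upwards [ae_mem_Ioo_of_mem_uIoc] with x hx hm
    refine tendsto_const_nhds.congr' ?_
    filter_upwards [eventually_two_lt_mul_bump (hx hm)] with n hn
    have e1 : cutoff₁ (n + 1) x = 0 := by
      simp [cutoff₁, deriv_smoothStep_eq_zero (Or.inr hn)]
    have e2 : cutoff₂ (n + 1) x = 0 := by
      simp [cutoff₂, deriv_smoothStep_eq_zero (Or.inr hn),
        deriv_deriv_smoothStep_eq_zero (Or.inr hn)]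
    simp [e1, e2]

lemma integral_sq_pos (h : ClampedMode c μ y y₁ y₂ y₃) : 0 < ∫ x in (0 : ℝ)..1, y x ^ 2 :=
  intervalIntegral.intervalIntegral_pos_of_pos_on
    ((h.continuous_zero.pow 2).intervalIntegrable _ _)
    (fun x hx => pow_pos (h.pos x hx) 2) zero_lt_one

end ClampedMode

lemma Adm1.const_mul {v : ℝ → ℝ} (hv : Adm1 v) (k : ℝ) : Adm1 fun x => k * v x := by
  obtain ⟨h1, h2, h3⟩ := hv
  exact ⟨contDiff_const.mul h1, h2.mul_left, (tsupport_mul_subset_right (f := fun _ => k)).trans h3⟩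

lemma ClampedMode.rho_eq {α μ : ℝ} {y y₁ y₂ y₃ : ℝ → ℝ}
    (h : ClampedMode (2 * α) μ y y₁ y₂ y₃) : rho α = μ := by
  set S : Set ℝ := { r | ∃ v : ℝ → ℝ, Adm1 v ∧ (∫ x in (0:ℝ)..1, (v x) ^ 2) = 1 ∧
    r = (∫ x in (0:ℝ)..1, (deriv (deriv v) x) ^ 2) +
        2 * α * (∫ x in (0:ℝ)..1, (deriv v x) ^ 2) } with hS
  have hlow : ∀ r ∈ S, μ ≤ r := by
    rintro r ⟨v, hv, hv1, rfl⟩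
    have := h.le_energy hv
    rwa [hv1, mul_one] at this
  have hbdd : BddBelow S := ⟨μ, hlow⟩
  have hmem : ∀ v : ℝ → ℝ, Adm1 v → 0 < (∫ x in (0:ℝ)..1, (v x) ^ 2) →
      ((∫ x in (0:ℝ)..1, (deriv (deriv v) x) ^ 2) +
        2 * α * (∫ x in (0:ℝ)..1, (deriv v x) ^ 2)) / (∫ x in (0:ℝ)..1, (v x) ^ 2) ∈ S := by
    intro v hv hpos
    set I := ∫ x in (0:ℝ)..1, (v x) ^ 2 with hI
    have hk : ((√I)⁻¹) ^ 2 = I⁻¹ := by rw [inv_pow, Real.sq_sqrt hpos.le]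
    refine ⟨fun x => (√I)⁻¹ * v x, hv.const_mul _, ?_, ?_⟩
    · simp only [mul_pow, intervalIntegral.integral_const_mul, hk]
      exact inv_mul_cancel₀ hpos.ne'
    · have d1 : deriv (fun x => (√I)⁻¹ * v x) = fun x => (√I)⁻¹ * deriv v x :=
        funext fun x => deriv_const_mul_field _
      have d2 : deriv (fun x => (√I)⁻¹ * deriv v x) = fun x => (√I)⁻¹ * deriv (deriv v) x :=
        funext fun x => deriv_const_mul_field _
      rw [d1, d2]
      simp only [mul_pow, intervalIntegral.integral_const_mul, hk]
      rw [div_eq_inv_mul]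
      ring
  have hIpos := h.integral_sq_pos
  have hlim : Tendsto (fun n : ℕ => μ + (∫ x in (0 : ℝ)..1, ((y x * cutoff₂ (n + 1) x) ^ 2 +
      (2 * y₁ x ^ 2 - 4 * y x * y₂ x + 2 * α * y x ^ 2) * cutoff₁ (n + 1) x ^ 2)) /
      ∫ x in (0 : ℝ)..1, (y x * cutoff (n + 1) x) ^ 2) atTop (nhds μ) := by
    simpa using (h.tendsto_integral_potential.div h.tendsto_integral_mul_cutoff_sq
      hIpos.ne').const_add μ
  have hev : ∀ᶠ n : ℕ in atTop, μ + (∫ x in (0 : ℝ)..1, ((y x * cutoff₂ (n + 1) x) ^ 2 +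
      (2 * y₁ x ^ 2 - 4 * y x * y₂ x + 2 * α * y x ^ 2) * cutoff₁ (n + 1) x ^ 2)) /
      (∫ x in (0 : ℝ)..1, (y x * cutoff (n + 1) x) ^ 2) ∈ S := by
    filter_upwards [h.tendsto_integral_mul_cutoff_sq.eventually_const_lt hIpos] with n hn
    have := hmem _ (adm1_mul_cutoff h.contDiff (n := n + 1) (by positivity)) hn
    rwa [h.picone (hasDerivAt_cutoff _) (hasDerivAt_cutoff₁ _) (continuous_cutoff₂ _), add_div,
      mul_div_cancel_right₀ _ hn.ne'] at this
  refine le_antisymm (ge_of_tendsto hlim (hev.mono fun n hn => csInf_le hbdd hn)) ?_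
  obtain ⟨n, hn⟩ := hev.exists
  exact le_csInf ⟨_, hn⟩ hlow

lemma sinh_mul_le {q z : ℝ} (hq : 0 < q) (hz0 : 0 ≤ z) (hz1 : z ≤ 1) :
    sinh (q * z) ≤ z * sinh q := by
  have hc : ConvexOn ℝ (Set.Ici 0) sinh := by
    refine convexOn_of_deriv2_nonneg (convex_Ici 0) continuous_sinh.continuousOn
      differentiable_sinh.differentiableOn (by simpa using differentiable_cosh.differentiableOn)
      fun x hx => ?_
    rw [interior_Ici] at hx
    simpa using (le_of_lt hx : (0 : ℝ) ≤ x)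
  have := hc.2 (show (0 : ℝ) ∈ Set.Ici 0 by simp) (show q ∈ Set.Ici 0 from hq.le)
    (sub_nonneg.2 hz1) hz0 (sub_add_cancel 1 z)
  simpa [mul_comm] using this

lemma lt_sin_mul {p z : ℝ} (hp0 : 0 < p) (hpπ : p < π) (hz0 : 0 < z) (hz1 : z < 1) :
    z * sin p < sin (p * z) := by
  have := strictConcaveOn_sin_Icc.2 (show (0 : ℝ) ∈ Set.Icc 0 π from ⟨le_rfl, pi_pos.le⟩)
    (show p ∈ Set.Icc 0 π from ⟨hp0.le, hpπ.le⟩) hp0.ne (sub_pos.2 hz1) hz0 (sub_add_cancel 1 z)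
  simpa [mul_comm] using this

/-- Characteristic equation of the clamped beam under tension, `q tanh q = -p tan p`. -/
def CharEq (p q : ℝ) : Prop := q * sinh q * cos p + p * sin p * cosh q = 0

section Mode

variable {p q : ℝ}

/-- The first clamped mode on `(-1,1)`. -/
def mode (p q z : ℝ) : ℝ := -cos p * cosh (q * z) + cosh q * cos (p * z)

/-- First derivative of `mode`. -/
def mode₁ (p q z : ℝ) : ℝ := -cos p * (q * sinh (q * z)) - cosh q * (p * sin (p * z))

/-- Second derivative of `mode`. -/
def mode₂ (p q z : ℝ) : ℝ := -cos p * (q ^ 2 * cosh (q * z)) - cosh q * (p ^ 2 * cos (p * z))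

/-- Third derivative of `mode`. -/
def mode₃ (p q z : ℝ) : ℝ := -cos p * (q ^ 3 * sinh (q * z)) + cosh q * (p ^ 3 * sin (p * z))

lemma hasDerivAt_const_mul_id (k z : ℝ) : HasDerivAt (fun z => k * z) k z := by
  simpa using (hasDerivAt_id z).const_mul k

lemma hasDerivAt_mode (z : ℝ) : HasDerivAt (mode p q) (mode₁ p q z) z := by
  refine (((hasDerivAt_const_mul_id q z).cosh.const_mul _).add
    ((hasDerivAt_const_mul_id p z).cos.const_mul _)).congr_deriv ?_
  simp only [mode₁]
  ring

lemma hasDerivAt_mode₁ (z : ℝ) : HasDerivAt (mode₁ p q) (mode₂ p q z) z := by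
  refine ((((hasDerivAt_const_mul_id q z).sinh.const_mul q).const_mul _).sub
    (((hasDerivAt_const_mul_id p z).sin.const_mul p).const_mul _)).congr_deriv ?_
  simp only [mode₂]
  ring

lemma hasDerivAt_mode₂ (z : ℝ) : HasDerivAt (mode₂ p q) (mode₃ p q z) z := by
  refine ((((hasDerivAt_const_mul_id q z).cosh.const_mul (q ^ 2)).const_mul _).sub
    (((hasDerivAt_const_mul_id p z).cos.const_mul (p ^ 2)).const_mul _)).congr_deriv ?_
  simp only [mode₃]
  ring

lemma hasDerivAt_mode₃ (z : ℝ) :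
    HasDerivAt (mode₃ p q) ((q ^ 2 - p ^ 2) * mode₂ p q z + p ^ 2 * q ^ 2 * mode p q z) z := by
  refine ((((hasDerivAt_const_mul_id q z).sinh.const_mul (q ^ 3)).const_mul _).add
    (((hasDerivAt_const_mul_id p z).sin.const_mul (p ^ 3)).const_mul _)).congr_deriv ?_
  simp only [mode₂, mode]
  ring

lemma mode_one : mode p q 1 = 0 := by
  simp only [mode, mul_one]
  ring

lemma mode₁_one (h : CharEq p q) : mode₁ p q 1 = 0 := by
  unfold CharEq at h
  simp only [mode₁, mul_one]
  linarith

lemma mode_neg (z : ℝ) : mode p q (-z) = mode p q z := by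
  simp [mode]

lemma mode₁_neg (z : ℝ) : mode₁ p q (-z) = -mode₁ p q z := by
  simp only [mode₁, mul_neg, sinh_neg, sin_neg]
  ring

lemma mode₂_neg (z : ℝ) : mode₂ p q (-z) = mode₂ p q z := by
  simp [mode₂]

lemma mode₁_neg_of_mem (hp : π / 2 < p) (hpπ : p < π) (hpq : p < q) (h : CharEq p q) {z : ℝ}
    (hz0 : 0 < z) (hz1 : z < 1) : mode₁ p q z < 0 := by
  have hp0 : 0 < p := by linarith [pi_pos]
  have hq0 : 0 < q := hp0.trans hpq
  have hc : cos p < 0 := cos_neg_of_pi_div_two_lt_of_lt hp (by linarith)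
  have h1 : -cos p * (q * sinh (q * z)) ≤ -cos p * (q * (z * sinh q)) := by
    have := sinh_mul_le hq0 hz0.le hz1.le
    have : 0 ≤ -cos p := by linarith
    gcongr
  have h2 : cosh q * (p * (z * sin p)) < cosh q * (p * sin (p * z)) := by
    have := lt_sin_mul hp0 hpπ hz0 hz1
    have := cosh_pos q
    gcongr
  have h3 : -cos p * (q * (z * sinh q)) = cosh q * (p * (z * sin p)) := by
    unfold CharEq at h
    linear_combination -z * h
  unfold mode₁
  linarith

lemma mode_pos (hp : π / 2 < p) (hpπ : p < π) (hpq : p < q) (h : CharEq p q) {z : ℝ}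
    (hz : |z| < 1) : 0 < mode p q z := by
  have hanti : StrictAntiOn (mode p q) (Set.Icc 0 1) := by
    refine strictAntiOn_of_deriv_neg (convex_Icc 0 1)
      (fun z _ => (hasDerivAt_mode z).continuousAt.continuousWithinAt) fun z hz => ?_
    rw [interior_Icc] at hz
    rw [(hasDerivAt_mode z).deriv]
    exact mode₁_neg_of_mem hp hpπ hpq h hz.1 hz.2
  have e : mode p q z = mode p q |z| := by
    rcases abs_choice z with hz | hz <;> rw [hz]
    rw [mode_neg]
  rw [e, ← mode_one (p := p) (q := q)]
  exact hanti ⟨abs_nonneg z, hz.le⟩ (by simp) hz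

lemma mode_potential_nonneg (hp : π / 2 < p) (hpπ : p < π) (hpq : p < q) (h : CharEq p q) {z : ℝ}
    (hz : |z| ≤ 1) :
    0 ≤ 2 * mode₁ p q z ^ 2 - 4 * (mode p q z * mode₂ p q z) +
      (q ^ 2 - p ^ 2) * mode p q z ^ 2 := by
  have hp0 : 0 < p := by linarith [pi_pos]
  have hq0 : 0 < q := hp0.trans hpq
  have hc : cos p < 0 := cos_neg_of_pi_div_two_lt_of_lt hp (by linarith)
  set M : ℝ → ℝ := fun z => 2 * mode₁ p q z ^ 2 - 4 * (mode p q z * mode₂ p q z) +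
      (q ^ 2 - p ^ 2) * mode p q z ^ 2 with hM
  have hd : ∀ z, HasDerivAt M (-2 * mode p q z *
      (2 * mode₃ p q z - (q ^ 2 - p ^ 2) * mode₁ p q z)) z := by
    intro z
    have a0 := hasDerivAt_mode (p := p) (q := q) z
    have a1 := hasDerivAt_mode₁ (p := p) (q := q) z
    have a2 := hasDerivAt_mode₂ (p := p) (q := q) z
    refine ((((a1.pow 2).const_mul 2).sub ((a0.mul a2).const_mul 4)).add
      ((a0.pow 2).const_mul (q ^ 2 - p ^ 2))).congr_deriv ?_
    simp
    ring
  have hanti : AntitoneOn M (Set.Icc 0 1) := by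
    refine antitoneOn_of_deriv_nonpos (convex_Icc 0 1)
      (fun z _ => (hd z).continuousAt.continuousWithinAt)
      (fun z _ => (hd z).differentiableAt.differentiableWithinAt) fun z hz => ?_
    rw [interior_Icc] at hz
    rw [(hd z).deriv]
    have e : 2 * mode₃ p q z - (q ^ 2 - p ^ 2) * mode₁ p q z =
        (p ^ 2 + q ^ 2) * (-cos p * (q * sinh (q * z)) + cosh q * (p * sin (p * z))) := by
      simp only [mode₃, mode₁]
      ring
    have h1 : 0 ≤ sinh (q * z) := sinh_nonneg_iff.2 (mul_pos hq0 hz.1).le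
    have h2 : 0 ≤ sin (p * z) :=
      sin_nonneg_of_nonneg_of_le_pi (mul_pos hp0 hz.1).le (by nlinarith [hz.1, hz.2])
    have h3 := cosh_pos q
    have h4 : 0 ≤ -cos p := by linarith
    have h5 := mode_pos hp hpπ hpq h (z := z) (abs_lt.2 ⟨by linarith [hz.1], hz.2⟩)
    rw [e, neg_mul, neg_mul]
    exact neg_nonpos.2 (by positivity)
  have e : M z = M |z| := by
    rcases abs_choice z with hz | hz <;> rw [hz]
    simp only [hM, mode_neg, mode₁_neg, mode₂_neg, neg_sq]
  have h1 : M 1 = 0 := by simp [hM, mode_one, mode₁_one h]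
  change 0 ≤ M z
  rw [e, ← h1]
  exact hanti ⟨abs_nonneg z, hz⟩ (by simp) hz

lemma hasDerivAt_rescale {f f' : ℝ → ℝ} (hf : ∀ z, HasDerivAt f (f' z) z) (k x : ℝ) :
    HasDerivAt (fun x => k * f (2 * x - 1)) (k * 2 * f' (2 * x - 1)) x := by
  have h : HasDerivAt (fun x : ℝ => 2 * x - 1) 2 x := by
    simpa using (hasDerivAt_const_mul_id 2 x).sub_const 1
  refine ((HasDerivAt.comp x (hf _) h).const_mul k).congr_deriv ?_
  ring

lemma clampedMode_mode (hp : π / 2 < p) (hpπ : p < π) (hpq : p < q) (h : CharEq p q) :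
    ClampedMode (2 * (2 * (q ^ 2 - p ^ 2))) (16 * p ^ 2 * q ^ 2) (fun x => mode p q (2 * x - 1))
      (fun x => 2 * mode₁ p q (2 * x - 1)) (fun x => 4 * mode₂ p q (2 * x - 1))
      (fun x => 8 * mode₃ p q (2 * x - 1)) where
  contDiff := by
    unfold mode
    fun_prop
  deriv_zero x := by simpa using hasDerivAt_rescale hasDerivAt_mode 1 x
  deriv_one x := (hasDerivAt_rescale hasDerivAt_mode₁ 2 x).congr_deriv (by ring)
  deriv_two x := (hasDerivAt_rescale hasDerivAt_mode₂ 4 x).congr_deriv (by ring)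
  deriv_three x := (hasDerivAt_rescale hasDerivAt_mode₃ 8 x).congr_deriv (by ring)
  left := by norm_num [mode_neg, mode_one]
  right := by norm_num [mode_one]
  left' := by norm_num [mode₁_neg, mode₁_one h]
  right' := by norm_num [mode₁_one h]
  pos x hx := mode_pos hp hpπ hpq h (abs_lt.2 ⟨by linarith [hx.1], by linarith [hx.2]⟩)
  potential_nonneg x hx := by
    have := mode_potential_nonneg hp hpπ hpq h (z := 2 * x - 1)
      (abs_le.2 ⟨by linarith [hx.1], by linarith [hx.2]⟩)
    linarith

/-- Explicit value of `ρ` along the solution curve of the characteristic equation. -/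
lemma rho_of_charEq (hp : π / 2 < p) (hpπ : p < π) (hpq : p < q) (h : CharEq p q) :
    rho (2 * (q ^ 2 - p ^ 2)) = 16 * p ^ 2 * q ^ 2 :=
  (clampedMode_mode hp hpπ hpq h).rho_eq

end Mode

/-- The function `q ↦ q tanh q`. -/
def mulTanh (q : ℝ) : ℝ := q * (sinh q / cosh q)

/-- The function `p ↦ -p tan p`. -/
def negMulTan (p : ℝ) : ℝ := -(p * (sin p / cos p))

lemma hasStrictDerivAt_mulTanh {q : ℝ} (hq : q ≠ 0) :
    HasStrictDerivAt mulTanh ((q ^ 2 - (mulTanh q ^ 2 - mulTanh q)) / q) q := by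
  have hc := (cosh_pos q).ne'
  refine ((hasStrictDerivAt_id q).mul
    ((hasStrictDerivAt_sinh q).div (hasStrictDerivAt_cosh q) hc)).congr_deriv ?_
  simp only [mulTanh, id, Pi.div_apply]
  field_simp
  ring

lemma hasDerivAt_negMulTan {p : ℝ} (hp : p ≠ 0) (hc : cos p ≠ 0) :
    HasDerivAt negMulTan (-(p ^ 2 + (negMulTan p ^ 2 - negMulTan p)) / p) p := by
  refine (((hasDerivAt_id p).mul
    ((hasDerivAt_sin p).div (hasDerivAt_cos p) hc)).neg).congr_deriv ?_
  simp only [negMulTan, id, Pi.div_apply]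
  field_simp
  ring

lemma continuous_mulTanh : Continuous mulTanh :=
  continuous_id.mul (continuous_sinh.div continuous_cosh fun x => (cosh_pos x).ne')

lemma mulTanh_sq_le (q : ℝ) : mulTanh q ^ 2 ≤ q ^ 2 := by
  have hc := cosh_pos q
  rw [mulTanh, mul_pow, div_pow]
  refine mul_le_of_le_one_right (sq_nonneg q) ?_
  rw [div_le_one (by positivity), cosh_sq]
  linarith

lemma mulTanh_pos {q : ℝ} (hq : 0 < q) : 0 < mulTanh q :=
  mul_pos hq (div_pos (sinh_pos_iff.2 hq) (cosh_pos q))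

lemma one_lt_mulTanh {q : ℝ} (hq : 3 / 2 < q) : 1 < mulTanh q := by
  have hc := cosh_pos q
  have hs : 0 < sinh q := sinh_pos_iff.2 (by linarith)
  rw [mulTanh, ← mul_div_assoc, one_lt_div hc]
  have h1 : 3 / 2 * sinh q ≤ q * sinh q := by gcongr
  refine lt_of_lt_of_le ?_ h1
  have h2 := quadratic_le_exp_of_nonneg (show 0 ≤ q by linarith)
  have h3 : 3 ≤ exp q := by nlinarith
  have h4 : exp q * exp (-q) = 1 := by rw [← exp_add]; simp
  have h5 := exp_pos (-q)
  rw [cosh_eq, sinh_eq]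
  nlinarith

lemma strictMonoOn_mulTanh : StrictMonoOn mulTanh (Set.Ioi 0) := by
  refine strictMonoOn_of_deriv_pos (convex_Ioi 0) continuous_mulTanh.continuousOn fun q hq => ?_
  rw [interior_Ioi] at hq
  have hq : 0 < q := hq
  rw [(hasStrictDerivAt_mulTanh hq.ne').hasDerivAt.deriv]
  have h1 := mulTanh_sq_le q
  have h2 := mulTanh_pos hq
  exact div_pos (by linarith) hq

lemma cos_neg_of_mem {p : ℝ} (hp : p ∈ Set.Ioo (π / 2) π) : cos p < 0 :=
  cos_neg_of_pi_div_two_lt_of_lt hp.1 (by linarith [hp.2, pi_pos])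

lemma three_halves_lt_of_mem {p : ℝ} (hp : p ∈ Set.Ioo (π / 2) π) : 3 / 2 < p := by
  linarith [hp.1, pi_gt_three]

lemma strictAntiOn_negMulTan : StrictAntiOn negMulTan (Set.Ioo (π / 2) π) := by
  have hd : ∀ p ∈ Set.Ioo (π / 2) π,
      HasDerivAt negMulTan (-(p ^ 2 + (negMulTan p ^ 2 - negMulTan p)) / p) p := fun p hp =>
    hasDerivAt_negMulTan (by linarith [three_halves_lt_of_mem hp]) (cos_neg_of_mem hp).ne
  refine strictAntiOn_of_deriv_neg (convex_Ioo _ _)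
    (fun p hp => (hd p hp).continuousAt.continuousWithinAt) fun p hp => ?_
  rw [interior_Ioo] at hp
  rw [(hd p hp).deriv]
  have hp0 := three_halves_lt_of_mem hp
  have hc := cos_neg_of_mem hp
  have e : p ^ 2 + (negMulTan p ^ 2 - negMulTan p) = p * (p + sin p * cos p) / cos p ^ 2 := by
    have h := sin_sq_add_cos_sq p
    have hc' := hc.ne
    simp only [negMulTan]
    field_simp
    linear_combination p * h
  rw [e, neg_div, neg_lt_zero]
  have h1 : 0 < p + sin p * cos p := by nlinarith [sin_sq_add_cos_sq p, sq_nonneg (sin p + cos p)]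
  have := hc.ne
  positivity

/-- The part of the characteristic curve `q tanh q = -p tan p` that carries the first modes. -/
def OnCurve (p q : ℝ) : Prop := p ∈ Set.Ioo (π / 2) π ∧ p < q ∧ mulTanh q = negMulTan p

/-- The positive `q` with `q tanh q = -p tan p`. -/
def curve (p : ℝ) : ℝ := Function.invFunOn mulTanh (Set.Ioi 0) (negMulTan p)

lemma curve_eq {p q : ℝ} (hq : 0 < q) (h : mulTanh q = negMulTan p) : curve p = q := by
  rw [curve, ← h]
  exact strictMonoOn_mulTanh.injOn.leftInvOn_invFunOn hq

namespace OnCurve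

variable {p q p' q' : ℝ}

lemma pos_left (h : OnCurve p q) : 0 < p := by linarith [three_halves_lt_of_mem h.1]

lemma pos_right (h : OnCurve p q) : 0 < q := h.pos_left.trans h.2.1

lemma curve_eq (h : OnCurve p q) : curve p = q := _root_.curve_eq h.pos_right h.2.2

lemma charEq (h : OnCurve p q) : CharEq p q := by
  have h1 := h.2.2
  have h2 := (cos_neg_of_mem h.1).ne
  have h3 := (cosh_pos q).ne'
  simp only [mulTanh, negMulTan] at h1
  field_simp at h1
  unfold CharEq
  linarith

lemma lt_right (h : OnCurve p q) (h' : OnCurve p' q') (hlt : p < p') : q' < q := by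
  rw [← strictMonoOn_mulTanh.lt_iff_lt h'.pos_right h.pos_right, h.2.2, h'.2.2]
  exact strictAntiOn_negMulTan h.1 h'.1 hlt

lemma sub_pos (h : OnCurve p q) : 0 < q ^ 2 - p ^ 2 := by
  nlinarith [h.2.1, h.pos_left]

lemma lt_left (h : OnCurve p q) (h' : OnCurve p' q') (hlt : q ^ 2 - p ^ 2 < q' ^ 2 - p' ^ 2) :
    p' < p := by
  by_contra! hle
  rcases hle.lt_or_eq with hlt' | rfl
  · nlinarith [h.lt_right h' hlt', h.pos_left, h'.pos_right]
  · rw [← h.curve_eq, ← h'.curve_eq] at hlt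
    exact lt_irrefl _ hlt

lemma between (h : OnCurve p q) (h' : OnCurve p' q') {z : ℝ} (hz : z ∈ Set.Icc p p') :
    OnCurve z (curve z) := by
  have hmem : z ∈ Set.Ioo (π / 2) π := ⟨h.1.1.trans_le hz.1, hz.2.trans_lt h'.1.2⟩
  rcases hz.1.eq_or_lt with rfl | h1
  · rwa [h.curve_eq]
  rcases hz.2.eq_or_lt with rfl | h2
  · rwa [h'.curve_eq]
  have hq : q' ≤ q := (h.lt_right h' (h1.trans h2)).le
  obtain ⟨w, hw, hwz⟩ := intermediate_value_Icc hq continuous_mulTanh.continuousOn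
    (show negMulTan z ∈ Set.Icc (mulTanh q') (mulTanh q) by
      rw [h.2.2, h'.2.2]
      exact ⟨(strictAntiOn_negMulTan hmem h'.1 h2).le, (strictAntiOn_negMulTan h.1 hmem h1).le⟩)
  have hw0 : z < w := h2.trans (h'.2.1.trans_le hw.1)
  have hw1 : OnCurve z w := ⟨hmem, hw0, hwz⟩
  rwa [hw1.curve_eq]

lemma exists_of_pos {D : ℝ} (hD : 0 < D) : ∃ p q, OnCurve p q ∧ q ^ 2 - p ^ 2 = D := by
  have hcont : Continuous fun p => mulTanh (√(p ^ 2 + D)) * cos p + p * sin p := by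
    have := continuous_mulTanh
    fun_prop
  have hF : 0 < mulTanh (√(π ^ 2 + D)) := mulTanh_pos (by positivity)
  obtain ⟨p, hp, h0⟩ := intermediate_value_Ioo' (show π / 2 ≤ π by linarith [pi_pos])
    hcont.continuousOn (show (0 : ℝ) ∈ Set.Ioo _ _ by
      constructor
      · simpa using hF
      · simpa using pi_pos)
  have hp0 : 0 < p := by linarith [three_halves_lt_of_mem hp]
  have hs : √(p ^ 2 + D) ^ 2 = p ^ 2 + D := Real.sq_sqrt (by positivity)
  refine ⟨p, √(p ^ 2 + D), ⟨hp, Real.lt_sqrt_of_sq_lt (by linarith), ?_⟩, by rw [hs]; ring⟩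
  have hc := (cos_neg_of_mem hp).ne
  simp only at h0
  rw [negMulTan]
  field_simp
  linarith

end OnCurve

/-- `q² - p²` along the curve. -/
def curveGap (p : ℝ) : ℝ := curve p ^ 2 - p ^ 2

/-- `p² q² / (q² - p²)` along the curve. -/
def curveLevel (p : ℝ) : ℝ := p ^ 2 * curve p ^ 2 / curveGap p

/-- `T² - T` with `T = -p tan p`. -/
def curveDefect (p : ℝ) : ℝ := negMulTan p ^ 2 - negMulTan p

/-- Minus the logarithmic slope of `curveLevel` with respect to `curveGap`. -/
def curveSlope (p : ℝ) : ℝ :=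
  curveLevel p * (curveGap p + 2 * curveLevel p - curveDefect p) /
    (2 * curveLevel p + curveDefect p)

lemma slope_polynomial_pos {R D K P w : ℝ} (hR : 0 < R) (hD : 0 < D) (hK : 0 < K) (hP : 0 < P)
    (hw : K * (P + K) ≤ w) :
    0 < 8 * R ^ 3 + 4 * K * R ^ 2 - 6 * K ^ 2 * R + K ^ 3 + 2 * K * R * D + K * D ^ 2 -
      3 * K ^ 2 * D + w * (D + 4 * R) := by
  have h1 : K * (P + K) * (D + 4 * R) ≤ w * (D + 4 * R) := by gcongr
  have h2 : 0 < K * (((D - K) + R) ^ 2 + 3 * R ^ 2) + 8 * R ^ 3 + K * P * (D + 4 * R) := by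
    positivity
  linarith

namespace OnCurve

variable {p q p' q' : ℝ}

lemma one_lt_negMulTan (h : OnCurve p q) : 1 < negMulTan p := by
  rw [← h.2.2]
  exact one_lt_mulTanh ((three_halves_lt_of_mem h.1).trans h.2.1)

lemma curveDefect_pos (h : OnCurve p q) : 0 < curveDefect p := by
  have := h.one_lt_negMulTan
  unfold curveDefect
  nlinarith

lemma negMulTan_le_sq_sub_curveDefect (h : OnCurve p q) :
    negMulTan p ≤ q ^ 2 - curveDefect p := by
  have := mulTanh_sq_le q
  rw [h.2.2] at this
  unfold curveDefect
  linarith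

lemma curveGap_eq (h : OnCurve p q) : curveGap p = q ^ 2 - p ^ 2 := by
  rw [curveGap, h.curve_eq]

lemma curveGap_pos (h : OnCurve p q) : 0 < curveGap p := by
  rw [h.curveGap_eq]
  exact h.sub_pos

lemma curveLevel_pos (h : OnCurve p q) : 0 < curveLevel p := by
  have h1 := h.curveGap_pos
  have h2 := h.pos_left
  have h3 := h.pos_right
  rw [curveLevel, h.curve_eq]
  positivity

lemma hasDerivAt_curve (h : OnCurve p q) :
    HasDerivAt curve (-(p ^ 2 + curveDefect p) * q / (p * (q ^ 2 - curveDefect p))) p := by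
  have hp := h.pos_left
  have hq := h.pos_right
  have hQ : 0 < q ^ 2 - curveDefect p := by
    linarith [h.negMulTan_le_sq_sub_curveDefect, h.one_lt_negMulTan]
  have hF := hasStrictDerivAt_mulTanh hq.ne'
  rw [h.2.2] at hF
  have hF' : (q ^ 2 - (negMulTan p ^ 2 - negMulTan p)) / q ≠ 0 := (div_pos hQ hq).ne'
  have hT := hasDerivAt_negMulTan hp.ne' (cos_neg_of_mem h.1).ne
  set g := hF.localInverse mulTanh _ q hF' with hg
  have hgd : HasDerivAt g ((q ^ 2 - (negMulTan p ^ 2 - negMulTan p)) / q)⁻¹ (negMulTan p) := by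
    have := (hF.to_localInverse hF').hasDerivAt
    rwa [h.2.2] at this
  have hgr : ∀ᶠ t in nhds (negMulTan p), mulTanh (g t) = t := by
    have := hF.eventually_right_inverse hF'
    rwa [h.2.2] at this
  have hgq : g (negMulTan p) = q := by
    have := (hF.eventually_left_inverse hF').self_of_nhds
    rwa [h.2.2] at this
  have hgpos : ∀ᶠ t in nhds (negMulTan p), 0 < g t :=
    hgd.continuousAt.eventually_const_lt (by rwa [hgq])
  have hev : curve =ᶠ[nhds p] fun z => g (negMulTan z) := by
    filter_upwards [hT.continuousAt.eventually hgr, hT.continuousAt.eventually hgpos] with z h1 h2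
    exact _root_.curve_eq h2 h1
  refine ((HasDerivAt.comp p hgd hT).congr_of_eventuallyEq hev).congr_deriv ?_
  have hQ' := hQ.ne'
  unfold curveDefect at hQ' ⊢
  field_simp

/-- Positive scale of the derivatives along the curve. -/
lemma exists_hasDerivAt (h : OnCurve p q) : ∃ l : ℝ, 0 < l ∧
    HasDerivAt curveGap (-(2 * l * curveGap p * (2 * curveLevel p + curveDefect p))) p ∧
    HasDerivAt curveLevel
      (2 * l * curveLevel p * (curveGap p + 2 * curveLevel p - curveDefect p)) p ∧
    HasDerivAt curveDefect
      (-(l * (2 * negMulTan p - 1) * ((p ^ 2 + curveDefect p) * (q ^ 2 - curveDefect p)))) p := by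
  have hp := h.pos_left
  have hq := h.pos_right
  have hQ : 0 < q ^ 2 - curveDefect p := by
    linarith [h.negMulTan_le_sq_sub_curveDefect, h.one_lt_negMulTan]
  have hD := h.curveGap_pos
  have hD' := hD.ne'
  have hQ' := hQ.ne'
  have hc := h.hasDerivAt_curve
  have hT := hasDerivAt_negMulTan hp.ne' (cos_neg_of_mem h.1).ne
  have hL : curveLevel p = p ^ 2 * q ^ 2 / curveGap p := by rw [curveLevel, h.curve_eq]
  have hq2 : q ^ 2 = curveGap p + p ^ 2 := by rw [h.curveGap_eq]; ring
  have hgap : HasDerivAt curveGap (-(2 * (p * (q ^ 2 - curveDefect p))⁻¹ * curveGap p *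
      (2 * curveLevel p + curveDefect p))) p := by
    refine ((hc.pow 2).sub ((hasDerivAt_id p).pow 2)).congr_deriv ?_
    rw [hL, h.curve_eq]
    simp only [id, Nat.cast_ofNat, Nat.add_one_sub_one, pow_one, mul_one]
    rw [h.curveGap_eq] at hD' ⊢
    field_simp
    ring
  refine ⟨(p * (q ^ 2 - curveDefect p))⁻¹, by positivity, hgap, ?_, ?_⟩
  · refine ((((hasDerivAt_id p).pow 2).mul (hc.pow 2)).div hgap hD').congr_deriv ?_
    rw [hL]
    simp only [id, Nat.cast_ofNat, Nat.add_one_sub_one, pow_one, mul_one, Pi.mul_apply,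
      Pi.pow_apply, h.curve_eq]
    rw [h.curveGap_eq] at hD' ⊢
    field_simp
    ring
  · refine ((hT.pow 2).sub hT).congr_deriv ?_
    have e : negMulTan p ^ 2 - negMulTan p = curveDefect p := rfl
    simp only [Nat.cast_ofNat, Nat.add_one_sub_one, pow_one, e]
    field_simp
    ring

lemma curveDefect_mul_le (h : OnCurve p q) :
    curveDefect p * (p ^ 2 + curveDefect p) ≤
      (negMulTan p - 1 / 2) * ((p ^ 2 + curveDefect p) * (q ^ 2 - curveDefect p)) := by
  have h1 := h.negMulTan_le_sq_sub_curveDefect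
  have h2 := h.one_lt_negMulTan
  have h3 := h.curveDefect_pos
  have h4 : curveDefect p ≤ (negMulTan p - 1 / 2) * (q ^ 2 - curveDefect p) := by
    have : (negMulTan p - 1 / 2) * negMulTan p ≤
        (negMulTan p - 1 / 2) * (q ^ 2 - curveDefect p) :=
      mul_le_mul_of_nonneg_left h1 (by linarith)
    have e : curveDefect p = negMulTan p ^ 2 - negMulTan p := rfl
    nlinarith
  calc _ ≤ (negMulTan p - 1 / 2) * (q ^ 2 - curveDefect p) * (p ^ 2 + curveDefect p) := by gcongr
    _ = _ := by ring

lemma exists_hasDerivAt_curveSlope (h : OnCurve p q) :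
    ∃ e, 0 < e ∧ HasDerivAt curveSlope e p := by
  obtain ⟨l, hl, hD, hR, hK⟩ := h.exists_hasDerivAt
  have hD0 := h.curveGap_pos
  have hR0 := h.curveLevel_pos
  have hK0 := h.curveDefect_pos
  have key := slope_polynomial_pos hR0 hD0 hK0 (pow_pos h.pos_left 2) h.curveDefect_mul_le
  have hU : 0 < 2 * curveLevel p + curveDefect p := by positivity
  have hd := (hR.mul ((hD.add (hR.const_mul 2)).sub hK)).div ((hR.const_mul 2).add hK) hU.ne'
  refine ⟨_, ?_, hd⟩
  simp only [Pi.add_apply, Pi.mul_apply, Pi.sub_apply]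
  refine div_pos ?_ (pow_pos hU 2)
  have := mul_pos (mul_pos two_pos (mul_pos hl hR0)) key
  linarith

lemma curveSlope_lt (h : OnCurve p q) (h' : OnCurve p' q') (hlt : p < p') :
    curveSlope p < curveSlope p' := by
  have hd := fun z (hz : z ∈ Set.Icc p p') => (h.between h' hz).exists_hasDerivAt_curveSlope
  refine strictMonoOn_of_deriv_pos (convex_Icc p p') (fun z hz => ?_) (fun z hz => ?_)
    (Set.left_mem_Icc.2 hlt.le) (Set.right_mem_Icc.2 hlt.le) hlt
  · obtain ⟨e, -, he⟩ := hd z hz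
    exact he.continuousAt.continuousWithinAt
  · obtain ⟨e, he0, he⟩ := hd z (interior_subset hz)
    rwa [he.deriv]

lemma exists_curveLevel_sub_eq (h : OnCurve p q) (h' : OnCurve p' q') (hlt : p < p') :
    ∃ z ∈ Set.Ioo p p', curveLevel p' - curveLevel p =
      curveSlope z * (log (curveGap p) - log (curveGap p')) := by
  have hc := fun z (hz : z ∈ Set.Icc p p') => h.between h' hz
  choose! l hl hD hR hK using fun z (hz : z ∈ Set.Icc p p') => (hc z hz).exists_hasDerivAt
  have hlog := fun z (hz : z ∈ Set.Icc p p') => (hD z hz).log (hc z hz).curveGap_pos.ne'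
  obtain ⟨z, hz, e⟩ := exists_ratio_hasDerivAt_eq_ratio_slope curveLevel _ hlt
    (fun z hz => (hR z hz).continuousAt.continuousWithinAt)
    (fun z hz => hR z (Set.Ioo_subset_Icc_self hz)) (fun z => log (curveGap z)) _
    (fun z hz => (hlog z hz).continuousAt.continuousWithinAt)
    (fun z hz => hlog z (Set.Ioo_subset_Icc_self hz))
  refine ⟨z, hz, ?_⟩
  have hz' := Set.Ioo_subset_Icc_self hz
  have hl0 := (hl z hz').ne'
  have hD0 := (hc z hz').curveGap_pos.ne'
  have hU : 2 * curveLevel z + curveDefect z ≠ 0 := by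
    have := (hc z hz').curveLevel_pos
    have := (hc z hz').curveDefect_pos
    positivity
  rw [curveSlope]
  field_simp at e ⊢
  linarith

lemma rho_eq (h : OnCurve p q) : rho (2 * curveGap p) = 16 * (curveLevel p * curveGap p) := by
  have h1 := h.curveGap_pos.ne'
  rw [h.curveGap_eq, rho_of_charEq h.1.1 h.1.2 h.2.1 h.charEq, curveLevel, h.curve_eq]
  rw [h.curveGap_eq] at h1 ⊢
  field_simp

end OnCurve

/-- Every positive gap is attained on the curve, with the corresponding value of `ρ`. -/
lemma exists_onCurve {t : ℝ} (ht : 0 < t) : ∃ p q, OnCurve p q ∧ curveGap p = π ^ 2 * t / 2 ∧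
    rho (π ^ 2 * t) * t⁻¹ = 8 * π ^ 2 * curveLevel p := by
  obtain ⟨p, q, h, hD⟩ := OnCurve.exists_of_pos (D := π ^ 2 * t / 2) (by positivity)
  have hg : curveGap p = π ^ 2 * t / 2 := h.curveGap_eq.trans hD
  refine ⟨p, q, h, hg, ?_⟩
  have e := h.rho_eq
  rw [hg, mul_div_cancel₀ _ two_ne_zero] at e
  rw [e]
  field_simp
  ring

/-- `L` is strictly increasing for `a > 1`. -/
theorem Lfun_strictMono (a b : ℝ) (ha : 1 < a) (hab : a < b) :
    Lfun a < Lfun b := by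
  have ha0 : 0 < a := by linarith
  have hb0 : 0 < b := by linarith
  have hL : ∀ x : ℝ, Lfun x = rho (π ^ 2 * x ^ 4) * (x ^ 4)⁻¹ +
      rho (π ^ 2 * (x ^ 4)⁻¹) * ((x ^ 4)⁻¹)⁻¹ - 2 * π ^ 4 := by
    intro x
    have : x ^ (-4 : ℤ) = (x ^ 4)⁻¹ := by
      rw [zpow_neg]
      rfl
    rw [Lfun, this, inv_inv]
  have hst : a ^ 4 < b ^ 4 := by gcongr
  have hs1 : 1 < a ^ 4 := one_lt_pow₀ ha (by norm_num)
  rw [hL, hL]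
  generalize a ^ 4 = s at *
  generalize b ^ 4 = t at *
  have hs0 : 0 < s := by linarith
  have ht0 : 0 < t := by linarith
  have hsinv : s⁻¹ < s := (inv_lt_one_of_one_lt₀ hs1).trans hs1
  have hinv : t⁻¹ < s⁻¹ := inv_strictAnti₀ hs0 hst
  obtain ⟨p₁, q₁, h₁, g₁, r₁⟩ := exists_onCurve ht0
  obtain ⟨p₂, q₂, h₂, g₂, r₂⟩ := exists_onCurve hs0
  obtain ⟨p₃, q₃, h₃, g₃, r₃⟩ := exists_onCurve (inv_pos.2 hs0)
  obtain ⟨p₄, q₄, h₄, g₄, r₄⟩ := exists_onCurve (inv_pos.2 ht0)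
  have hgap : ∀ {u v : ℝ}, u < v → π ^ 2 * u / 2 < π ^ 2 * v / 2 := by
    intro u v huv
    have := pi_pos
    gcongr
  have l₁₂ : p₁ < p₂ := h₂.lt_left h₁ (by
    rw [← h₂.curveGap_eq, ← h₁.curveGap_eq, g₁, g₂]; exact hgap hst)
  have l₂₃ : p₂ < p₃ := h₃.lt_left h₂ (by
    rw [← h₃.curveGap_eq, ← h₂.curveGap_eq, g₂, g₃]; exact hgap hsinv)
  have l₃₄ : p₃ < p₄ := h₄.lt_left h₃ (by
    rw [← h₄.curveGap_eq, ← h₃.curveGap_eq, g₃, g₄]; exact hgap hinv)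
  obtain ⟨z, hz, ez⟩ := h₁.exists_curveLevel_sub_eq h₂ l₁₂
  obtain ⟨w, hw, ew⟩ := h₃.exists_curveLevel_sub_eq h₄ l₃₄
  have hzw : curveSlope z < curveSlope w :=
    (h₁.between h₂ (Set.Ioo_subset_Icc_self hz)).curveSlope_lt
      (h₃.between h₄ (Set.Ioo_subset_Icc_self hw)) (hz.2.trans (l₂₃.trans hw.1))
  have hlog : ∀ {u : ℝ}, 0 < u → log (π ^ 2 * u / 2) = log (π ^ 2 / 2) + log u := by
    intro u hu
    rw [mul_div_right_comm, log_mul (by positivity) hu.ne']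
  rw [g₁, g₂, hlog ht0, hlog hs0] at ez
  rw [g₃, g₄, hlog (inv_pos.2 hs0), hlog (inv_pos.2 ht0), log_inv, log_inv] at ew
  have hpos : 0 < log t - log s := sub_pos.2 (log_lt_log hs0 hst)
  have hmul := mul_pos (sub_pos.2 hzw) hpos
  rw [r₁, r₂, r₃, r₄]
  have hlt : curveLevel p₂ + curveLevel p₃ < curveLevel p₁ + curveLevel p₄ := by linarith
  have := mul_lt_mul_of_pos_left hlt (show 0 < 8 * π ^ 2 by positivity)
  linarith
end
end
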